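/- Let H be an infinite-dimensional separable complex Hilbert space and W a symmetric countably syndetic subset of U(H). Then there exists ε > 0 such that the open ball B_ε = {u ∈ U(H) : ‖u − 1‖ < ε} in the operator norm is contained in W^496. -/

import Mathlib

open Pointwise
open scoped InnerProductSpace

/-!
In a Hilbert sum of infinitely many copies of `H`, diagonalisation yields an infinite set of
blocks on which the elements of `W ^ 2` realise every block-diagonal unitary, and pigeonhole
yields a shift of these blocks in `W ^ 2`; their commutators telescope to arbitrary unitaries of
one block. Hence `W ^ 8` contains the pointwise stabiliser of a subspace of infinite codimension.
Pigeonhole over an uncountable almost disjoint family of translates of it gives an orthonormal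
basis `b` and sets `A`, `B` with `A ∩ B` finite such that `W ^ 10` contains the stabilisers of
`b '' A` and `b '' B`. Four elements of these stabilisers multiply to any unitary fixing
`b '' (A ∩ B)`, so `W ^ 40` contains the stabiliser of a finite-dimensional space `F`.

Some `t ∈ W ^ 2` rotates `F` through an angle `θ` with `sin θ ≠ 0` towards an orthogonal copy, and
`W ^ 44` contains the stabiliser of `t '' F`. Up to left and right multiplication by the
stabiliser of `F`, a unitary `u` is determined by its compression `c` to `F`. If
`‖u - 1‖ < sin θ ^ 2 / 3`, polar decomposition writes `c` as `v * (1 - sin θ ^ 2 • (1 - d))` with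
`v` unitary near `1` and `d` a contraction. The second factor is the compression of an element of
the stabiliser of `t '' F`, and `v` is the action on `F` of a product `h * k * h` with `h` fixing
`t '' F` and `k` fixing `F`. In total `u` uses `3 * 40 + 2 * 44 = 208` factors from `W`, and
`1 ∈ W ^ 2` allows padding to `496`.
-/

theorem uncountable_nat_fun (α : Type*) [Nontrivial α] : Uncountable (ℕ → α) := by
  rw [← not_countable_iff]
  intro h
  obtain ⟨F, hF⟩ := exists_surjective_nat (ℕ → α)
  choose g hg using fun x : α => exists_ne x
  obtain ⟨n, hn⟩ := hF fun k => g (F k k)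
  exact hg _ (congrFun hn n).symm

section Syndetic

variable {G : Type*} [Group G] {W : Set G}

/-- A subset of a group countably many left translates of which cover the group. -/
def IsCountablySyndetic (W : Set G) : Prop :=
  ∃ s : ℕ → G, ∀ g, ∃ n, g ∈ s n • W

theorem IsCountablySyndetic.exists_ne_mem_smul {ι : Type*} [Uncountable ι]
    (hW : IsCountablySyndetic W) (t : ι → G) :
    ∃ i j, i ≠ j ∧ ∃ g : G, t i ∈ g • W ∧ t j ∈ g • W := by
  obtain ⟨s, hs⟩ := hW
  choose n hn using fun i => hs (t i)
  obtain ⟨i, j, hij, hne⟩ := Function.not_injective_iff.1 (not_injective_uncountable_countable n)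
  exact ⟨i, j, hne, s (n i), hn i, hij ▸ hn j⟩

theorem inv_mul_mem_sq_of_mem_smul (hsym : W⁻¹ = W) {g s t : G} (hs : s ∈ g • W)
    (ht : t ∈ g • W) : s⁻¹ * t ∈ W ^ 2 := by
  obtain ⟨v, hv, rfl⟩ := hs
  obtain ⟨w, hw, rfl⟩ := ht
  rw [pow_two]
  refine ⟨v⁻¹, hsym ▸ Set.inv_mem_inv.2 hv, w, hw, ?_⟩
  simp

theorem IsCountablySyndetic.exists_ne_inv_mul_mem_sq {ι : Type*} [Uncountable ι]
    (hW : IsCountablySyndetic W) (hsym : W⁻¹ = W) (t : ι → G) :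
    ∃ i j, i ≠ j ∧ (t i)⁻¹ * t j ∈ W ^ 2 :=
  let ⟨i, j, hne, _, hi, hj⟩ := hW.exists_ne_mem_smul t
  ⟨i, j, hne, inv_mul_mem_sq_of_mem_smul hsym hi hj⟩

theorem IsCountablySyndetic.one_mem_sq (hW : IsCountablySyndetic W) (hsym : W⁻¹ = W) :
    1 ∈ W ^ 2 := by
  obtain ⟨-, -, -, h⟩ := hW.exists_ne_inv_mul_mem_sq hsym fun _ : ℝ => (1 : G)
  simpa using h

theorem inv_mem_pow_of_inv_eq_self (hsym : W⁻¹ = W) {n : ℕ} {g : G} (hg : g ∈ W ^ n) :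
    g⁻¹ ∈ W ^ n := by
  rwa [← hsym, inv_pow, Set.inv_mem_inv]

end Syndetic

section Gram

variable {𝕜 H : Type*} [RCLike 𝕜] [NormedAddCommGroup H] [InnerProductSpace 𝕜 H]

theorem mem_orthogonal_span_iff {X : Set H} {v : H} :
    v ∈ (Submodule.span 𝕜 X)ᗮ ↔ ∀ x ∈ X, ⟪x, v⟫_𝕜 = 0 := by
  rw [← Submodule.span_singleton_le_iff_mem, ← Submodule.isOrtho_iff_le,
    Submodule.isOrtho_comm, Submodule.isOrtho_span]
  simp

theorem norm_linearCombination_eq_of_inner_eq {ι : Type*} {a b : ι → H}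
    (hab : ∀ i j, ⟪a i, a j⟫_𝕜 = ⟪b i, b j⟫_𝕜) (x : ι →₀ 𝕜) :
    ‖Finsupp.linearCombination 𝕜 b x‖ = ‖Finsupp.linearCombination 𝕜 a x‖ := by
  simp only [@norm_eq_sqrt_re_inner 𝕜, Finsupp.linearCombination_apply, Finsupp.sum, sum_inner,
    inner_sum, inner_smul_left, inner_smul_right, hab]

theorem denseRange_linearCombination [CompleteSpace H] {ι : Type*} {a : ι → H}
    (ha : (Submodule.span 𝕜 (Set.range a))ᗮ = ⊥) :
    DenseRange (Finsupp.linearCombination 𝕜 a) := by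
  rw [← Submodule.topologicalClosure_eq_top_iff, ← Finsupp.range_linearCombination] at ha
  exact Submodule.dense_iff_topologicalClosure_eq_top.2 ha

theorem exists_unitary_map_eq_of_orthogonal_eq_bot [CompleteSpace H] {ι : Type*} {a b : ι → H}
    (hab : ∀ i j, ⟪a i, a j⟫_𝕜 = ⟪b i, b j⟫_𝕜)
    (ha : (Submodule.span 𝕜 (Set.range a))ᗮ = ⊥) (hb : (Submodule.span 𝕜 (Set.range b))ᗮ = ⊥) :
    ∃ u : H ≃ₗᵢ[𝕜] H, ∀ i, u (a i) = b i := by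
  have hnorm := norm_linearCombination_eq_of_inner_eq hab
  refine ⟨(LinearEquiv.refl 𝕜 (ι →₀ 𝕜)).extendOfIsometry _ _ (denseRange_linearCombination ha)
    (denseRange_linearCombination hb) hnorm, fun i => ?_⟩
  simpa using (LinearEquiv.refl 𝕜 (ι →₀ 𝕜)).extendOfIsometry_eq _ _
    (denseRange_linearCombination ha) (denseRange_linearCombination hb) hnorm (Finsupp.single i 1)

variable (𝕜) in
/-- The vectors orthogonal to `X` form an infinite-dimensional space. -/
def HasInfiniteCodim (X : Set H) : Prop :=
  ¬ FiniteDimensional 𝕜 (Submodule.span 𝕜 X)ᗮ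

theorem HasInfiniteCodim.mono {X Y : Set H} (hY : HasInfiniteCodim 𝕜 Y) (hXY : X ⊆ Y) :
    HasInfiniteCodim 𝕜 X := fun _ =>
  hY (Submodule.finiteDimensional_of_le (Submodule.orthogonal_le (Submodule.span_mono hXY)))

theorem HasInfiniteCodim.image {X : Set H} (hX : HasInfiniteCodim 𝕜 X) (u : H ≃ₗᵢ[𝕜] H) :
    HasInfiniteCodim 𝕜 (u '' X) := by
  intro hfin
  rw [show u '' X = u.toLinearEquiv '' X from rfl, ← LinearEquiv.coe_coe, ← Submodule.map_span,
    ← Submodule.map_orthogonal_equiv] at hfin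
  exact hX (u.toLinearEquiv.submoduleMap (Submodule.span 𝕜 X)ᗮ).symm.finiteDimensional

theorem hasInfiniteCodim_of_orthonormal {ι : Type*} [Infinite ι] {X : Set H} {v : ι → H}
    (hv : Orthonormal 𝕜 v) (hXv : ∀ x ∈ X, ∀ i, ⟪x, v i⟫_𝕜 = 0) : HasInfiniteCodim 𝕜 X := by
  intro hfin
  have hmem : ∀ i, v i ∈ (Submodule.span 𝕜 X)ᗮ := fun i =>
    mem_orthogonal_span_iff.2 fun x hx => hXv x hx i
  have hli : LinearIndependent 𝕜 fun i => (⟨v i, hmem i⟩ : (Submodule.span 𝕜 X)ᗮ) :=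
    LinearIndependent.of_comp (Submodule.subtype _) hv.linearIndependent
  have := hli.finite
  exact not_finite ι

theorem hasInfiniteCodim_image {ι : Type*} {b : ι → H} (hb : Orthonormal 𝕜 b) {A : Set ι}
    (hA : Aᶜ.Infinite) : HasInfiniteCodim 𝕜 (b '' A) := by
  have := hA.to_subtype
  refine hasInfiniteCodim_of_orthonormal (hb.comp _ (Subtype.val_injective (p := (· ∈ Aᶜ)))) ?_
  rintro _ ⟨i, hi, rfl⟩ ⟨j, hj⟩
  exact hb.2 fun h : i = j => hj (h ▸ hi)

theorem hasInfiniteCodim_of_subset_finiteDimensional (hinf : ¬ FiniteDimensional 𝕜 H) {X : Set H}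
    {F : Submodule 𝕜 H} [FiniteDimensional 𝕜 F] (hX : X ⊆ F) : HasInfiniteCodim 𝕜 X := by
  intro hfin
  have : FiniteDimensional 𝕜 Fᗮ :=
    Submodule.finiteDimensional_of_le (Submodule.orthogonal_le (Submodule.span_le.2 hX))
  have : FiniteDimensional 𝕜 (F ⊔ Fᗮ : Submodule 𝕜 H) := Submodule.finiteDimensional_sup _ _
  rw [Submodule.sup_orthogonal_of_hasOrthogonalProjection] at this
  exact hinf Submodule.topEquiv.finiteDimensional

theorem countable_of_orthonormal [TopologicalSpace.SeparableSpace H] {ι : Type*}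
    {v : ι → H} (hv : Orthonormal 𝕜 v) : Countable ι := by
  have hd : Pairwise (Function.onFun Disjoint fun i => Metric.ball (v i) (1 / 2)) := by
    intro i j hij
    refine Metric.ball_disjoint_ball ?_
    have : ‖v i - v j‖ ^ 2 = 2 := by
      rw [@norm_sub_sq 𝕜, hv.2 hij, hv.1, hv.1]; norm_num
    rw [dist_eq_norm]
    nlinarith [norm_nonneg (v i - v j)]
  exact hd.countable_of_isOpen_disjoint (fun _ => Metric.isOpen_ball)
    fun i => ⟨v i, Metric.mem_ball_self (by norm_num)⟩

theorem nonempty_hilbertBasis [CompleteSpace H] [TopologicalSpace.SeparableSpace H]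
    (hinf : ¬ FiniteDimensional 𝕜 H) (ι : Type*) [Countable ι] [Infinite ι] :
    Nonempty (HilbertBasis ι 𝕜 H) := by
  obtain ⟨w, b, -⟩ := exists_hilbertBasis 𝕜 H
  have : Countable w := countable_of_orthonormal b.orthonormal
  have : Infinite w := by
    by_contra hfin
    rw [not_infinite_iff_finite] at hfin
    have := Fintype.ofFinite w
    exact hinf b.toOrthonormalBasis.toBasis.finiteDimensional_of_finite
  obtain ⟨e⟩ : Nonempty (ι ≃ w) := nonempty_equiv_of_countable
  refine ⟨HilbertBasis.mk (v := b ∘ e) (b.orthonormal.comp e e.injective) ?_⟩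
  rw [e.surjective.range_comp, b.dense_span]

theorem orthogonal_span_union_eq_bot {ι : Type*} {X : Set H}
    (r : HilbertBasis ι 𝕜 (Submodule.span 𝕜 X)ᗮ) :
    (Submodule.span 𝕜 (X ∪ Set.range fun i => (r i : H)))ᗮ = ⊥ := by
  rw [Submodule.eq_bot_iff]
  intro v hv
  rw [mem_orthogonal_span_iff] at hv
  have hvX : v ∈ (Submodule.span 𝕜 X)ᗮ := mem_orthogonal_span_iff.2 fun x hx => hv x (.inl hx)
  have : r.repr ⟨v, hvX⟩ = 0 := by
    ext i
    rw [r.repr_apply_apply]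
    exact hv _ (.inr ⟨i, rfl⟩)
  exact congrArg Subtype.val (r.repr.map_eq_zero_iff.1 this)

theorem exists_unitary_map_eq_of_hasInfiniteCodim [CompleteSpace H]
    [TopologicalSpace.SeparableSpace H] {ι : Type*} {a b : ι → H}
    (hab : ∀ i j, ⟪a i, a j⟫_𝕜 = ⟪b i, b j⟫_𝕜)
    (ha : HasInfiniteCodim 𝕜 (Set.range a)) (hb : HasInfiniteCodim 𝕜 (Set.range b)) :
    ∃ u : H ≃ₗᵢ[𝕜] H, ∀ i, u (a i) = b i := by
  obtain ⟨p⟩ := nonempty_hilbertBasis ha ℕ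
  obtain ⟨q⟩ := nonempty_hilbertBasis hb ℕ
  have horth : ∀ (c : ι → H) (r : HilbertBasis ℕ 𝕜 (Submodule.span 𝕜 (Set.range c))ᗮ) (i n),
      ⟪c i, (r n : H)⟫_𝕜 = 0 := fun c r i n => mem_orthogonal_span_iff.1 (r n).2 _ ⟨i, rfl⟩
  have hon : ∀ (c : ι → H) (r : HilbertBasis ℕ 𝕜 (Submodule.span 𝕜 (Set.range c))ᗮ) (m n),
      ⟪(r m : H), (r n : H)⟫_𝕜 = if m = n then 1 else 0 := fun _ r =>
    orthonormal_iff_ite.1 r.orthonormal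
  obtain ⟨u, hu⟩ := exists_unitary_map_eq_of_orthogonal_eq_bot (𝕜 := 𝕜)
    (a := Sum.elim a fun n => (p n : H)) (b := Sum.elim b fun n => (q n : H)) (by
      rintro (i | m) (j | n)
      · exact hab i j
      · simp [horth]
      · simp [inner_eq_zero_symm.1 (horth a p j m), inner_eq_zero_symm.1 (horth b q j m)]
      · simp [hon])
    (by rw [Set.Sum.elim_range, orthogonal_span_union_eq_bot])
    (by rw [Set.Sum.elim_range, orthogonal_span_union_eq_bot])
  exact ⟨u, fun i => hu (.inl i)⟩

end Gram

section Fixing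

variable {𝕜 H : Type*} [RCLike 𝕜] [NormedAddCommGroup H] [InnerProductSpace 𝕜 H]

variable (𝕜) in
/-- The pointwise stabiliser of `X` in the unitary group. -/
def unitaryFixing (X : Set H) : Subgroup (H ≃ₗᵢ[𝕜] H) where
  carrier := {u | ∀ x ∈ X, u x = x}
  one_mem' _ _ := rfl
  mul_mem' {u _} hu hv x hx := (congrArg u (hv x hx)).trans (hu x hx)
  inv_mem' {u} hu x hx := (u.symm_apply_eq).2 (hu x hx).symm

theorem unitaryFixing_anti {X Y : Set H} (hXY : X ⊆ Y) :
    unitaryFixing 𝕜 Y ≤ unitaryFixing 𝕜 X := fun _ hu x hx => hu x (hXY hx)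

theorem unitaryFixing_image_subset_pow {W : Set (H ≃ₗᵢ[𝕜] H)} (hsym : W⁻¹ = W) {X : Set H}
    {m n : ℕ} (hX : (unitaryFixing 𝕜 X : Set (H ≃ₗᵢ[𝕜] H)) ⊆ W ^ n) {t : H ≃ₗᵢ[𝕜] H}
    (ht : t ∈ W ^ m) :
    (unitaryFixing 𝕜 (t '' X) : Set (H ≃ₗᵢ[𝕜] H)) ⊆ W ^ (m + n + m) := by
  intro u hu
  have hconj : t⁻¹ * u * t ∈ unitaryFixing 𝕜 X := fun x hx =>
    t.symm_apply_eq.2 (hu (t x) ⟨x, hx, rfl⟩)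
  rw [show u = t * (t⁻¹ * u * t) * t⁻¹ by group, pow_add, pow_add]
  exact Set.mul_mem_mul (Set.mul_mem_mul ht (hX hconj)) (inv_mem_pow_of_inv_eq_self hsym ht)

theorem exists_mem_unitaryFixing_map_eq [CompleteSpace H] [TopologicalSpace.SeparableSpace H]
    {ι : Type*} {X : Set H} {a b : ι → H} (hab : ∀ i j, ⟪a i, a j⟫_𝕜 = ⟪b i, b j⟫_𝕜)
    (hXab : ∀ x ∈ X, ∀ i, ⟪x, a i⟫_𝕜 = ⟪x, b i⟫_𝕜)
    (ha : HasInfiniteCodim 𝕜 (Set.range a ∪ X)) (hb : HasInfiniteCodim 𝕜 (Set.range b ∪ X)) :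
    ∃ u ∈ unitaryFixing 𝕜 X, ∀ i, u (a i) = b i := by
  obtain ⟨u, hu⟩ := exists_unitary_map_eq_of_hasInfiniteCodim (𝕜 := 𝕜)
    (a := Sum.elim a ((↑) : X → H)) (b := Sum.elim b ((↑) : X → H)) (by
      rintro (i | x) (j | y)
      · exact hab i j
      · simpa using congrArg (starRingEnd 𝕜) (hXab y y.2 i)
      · exact hXab x x.2 j
      · rfl)
    (by rwa [Set.Sum.elim_range, Subtype.range_coe])
    (by rwa [Set.Sum.elim_range, Subtype.range_coe])
  exact ⟨u, fun x hx => hu (.inr ⟨x, hx⟩), fun i => hu (.inl i)⟩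

end Fixing

section HilbertSum

variable {𝕜 H : Type*} [RCLike 𝕜] [NormedAddCommGroup H] [InnerProductSpace 𝕜 H]

theorem continuousLinearMap_ext_hilbertBasis {E ι : Type*} [NormedAddCommGroup E] [NormedSpace 𝕜 E]
    (b : HilbertBasis ι 𝕜 H) {f g : H →L[𝕜] E} (h : ∀ i, f (b i) = g (b i)) : f = g :=
  ContinuousLinearMap.ext_on (Submodule.dense_iff_topologicalClosure_eq_top.2 b.dense_span)
    (by rintro _ ⟨i, rfl⟩; exact h i)

theorem inner_apply_eq_zero_of_hilbertBasis {ι : Type*} (b : HilbertBasis ι 𝕜 H) (L : H →ₗᵢ[𝕜] H)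
    {v : H} (hv : ∀ i, ⟪L (b i), v⟫_𝕜 = 0) (x : H) : ⟪L x, v⟫_𝕜 = 0 :=
  inner_eq_zero_symm.1 <| DFunLike.congr_fun (continuousLinearMap_ext_hilbertBasis b
    (f := (innerSL 𝕜 v).comp L.toContinuousLinearMap) (g := 0)
    fun i => inner_eq_zero_symm.1 (hv i)) x

variable [CompleteSpace H] {I : Type*} {e : I → H →ₗᵢ[𝕜] H}

theorem inner_linearIsometryEquiv_apply (he : IsHilbertSum 𝕜 (fun _ : I => H) e) (i : I) (x v : H) :
    ⟪x, he.linearIsometryEquiv v i⟫_𝕜 = ⟪e i x, v⟫_𝕜 := by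
  classical
  refine (lp.inner_single_left (𝕜 := 𝕜) i x (he.linearIsometryEquiv v)).symm.trans ?_
  rw [← he.linearIsometryEquiv.symm.inner_map_map, LinearIsometryEquiv.symm_apply_apply]
  exact congrArg (inner 𝕜 · v) (he.linearIsometryEquiv_symm_apply_single x)

theorem inner_eq_zero_of_isHilbertSum (he : IsHilbertSum 𝕜 (fun _ : I => H) e) {A : Set I}
    {v w : H} (hv : ∀ i ∈ A, ∀ x, ⟪e i x, v⟫_𝕜 = 0) (hw : ∀ i ∉ A, ∀ x, ⟪e i x, w⟫_𝕜 = 0) :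
    ⟪v, w⟫_𝕜 = 0 := by
  have hcoord : ∀ i z, (∀ x, ⟪e i x, z⟫_𝕜 = 0) → he.linearIsometryEquiv z i = 0 := fun i z hz =>
    ext_inner_left 𝕜 fun x => by
      rw [inner_zero_right]; exact (inner_linearIsometryEquiv_apply he i x z).trans (hz x)
  rw [← he.linearIsometryEquiv.inner_map_map, lp.inner_eq_tsum]
  refine (tsum_congr fun i => ?_).trans tsum_zero
  by_cases hi : i ∈ A
  · exact (congrArg (inner 𝕜 · _) (hcoord i v (hv i hi))).trans (inner_zero_left _)
  · exact (congrArg (inner 𝕜 _) (hcoord i w (hw i hi))).trans (inner_zero_right _)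

theorem unitary_apply_eq_self_of_isHilbertSum (he : IsHilbertSum 𝕜 (fun _ : I => H) e) {A : Set I}
    {u : H ≃ₗᵢ[𝕜] H} (hu : ∀ i ∉ A, ∀ x, u (e i x) = e i x) {v : H}
    (hv : ∀ i ∈ A, ∀ x, ⟪e i x, v⟫_𝕜 = 0) : u v = v := by
  have h0 : ⟪v, u v - v⟫_𝕜 = 0 := by
    refine inner_eq_zero_of_isHilbertSum he hv fun i hi x => ?_
    nth_rewrite 1 [inner_sub_right, ← hu i hi, u.inner_map_map, sub_self]
    rfl
  have := norm_add_sq_eq_norm_sq_add_norm_sq_of_inner_eq_zero _ _ h0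
  rwa [add_sub_cancel, u.norm_map, left_eq_add, mul_self_eq_zero, norm_eq_zero, sub_eq_zero] at this

theorem unitary_ext_of_isHilbertSum (he : IsHilbertSum 𝕜 (fun _ : I => H) e) {u u' : H ≃ₗᵢ[𝕜] H}
    (h : ∀ i x, u (e i x) = u' (e i x)) : u = u' := by
  ext v
  refine u'.symm.injective ((unitary_apply_eq_self_of_isHilbertSum he (A := ∅)
    (u := u.trans u'.symm) (fun i _ x => ?_) (by simp)).trans (u'.symm_apply_apply v).symm)
  exact u'.symm_apply_eq.2 (h i x)

theorem exists_unitary_monomial (he : IsHilbertSum 𝕜 (fun _ : I => H) e) (σ : Equiv.Perm I)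
    (T : I → H ≃ₗᵢ[𝕜] H) : ∃ u : H ≃ₗᵢ[𝕜] H, ∀ i x, u (e i x) = e (σ i) (T i x) := by
  have htotal : ∀ v, (∀ i x, ⟪e i x, v⟫_𝕜 = 0) → v = 0 := fun v hv =>
    inner_self_eq_zero.1 (inner_eq_zero_of_isHilbertSum he (A := Set.univ) (fun i _ => hv i)
      (by simp))
  obtain ⟨u, hu⟩ := exists_unitary_map_eq_of_orthogonal_eq_bot (𝕜 := 𝕜)
    (a := fun k : I × H => e k.1 k.2) (b := fun k : I × H => e (σ k.1) (T k.1 k.2)) (by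
      rintro ⟨i, x⟩ ⟨j, y⟩
      obtain rfl | hij := eq_or_ne i j
      · simp
      · rw [he.OrthogonalFamily hij, he.OrthogonalFamily (σ.injective.ne hij)])
    ((Submodule.eq_bot_iff _).2 fun v hv => htotal v fun i x =>
      mem_orthogonal_span_iff.1 hv _ ⟨(i, x), rfl⟩)
    ((Submodule.eq_bot_iff _).2 fun v hv => htotal v fun i x =>
      mem_orthogonal_span_iff.1 hv _ ⟨(σ.symm i, (T (σ.symm i)).symm x), by simp⟩)
  exact ⟨u, fun i x => hu (i, x)⟩

theorem exists_isHilbertSum [TopologicalSpace.SeparableSpace H] (hinf : ¬ FiniteDimensional 𝕜 H)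
    (I : Type*) [Countable I] [Nonempty I] :
    ∃ e : I → H →ₗᵢ[𝕜] H, IsHilbertSum 𝕜 (fun _ : I => H) e := by
  obtain ⟨p⟩ := nonempty_hilbertBasis hinf ℕ
  obtain ⟨b⟩ := nonempty_hilbertBasis hinf (I × ℕ)
  have hon : ∀ i, Orthonormal 𝕜 fun n => b (i, n) := fun i =>
    b.orthonormal.comp _ (Prod.mk_right_injective i)
  let e (i : I) : H →ₗᵢ[𝕜] H :=
    (hon i).orthogonalFamily.linearIsometry.comp p.repr.toLinearIsometry
  have hep : ∀ i n, e i (p n) = b (i, n) := by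
    intro i n
    classical
    change (hon i).orthogonalFamily.linearIsometry (p.repr (p n)) = _
    rw [p.repr_self, OrthogonalFamily.linearIsometry_apply_single]
    simp
  refine ⟨e, IsHilbertSum.mk (fun i j hij x y => ?_) ?_⟩
  · refine inner_apply_eq_zero_of_hilbertBasis p _ (fun n => ?_) x
    refine inner_eq_zero_symm.1 (inner_apply_eq_zero_of_hilbertBasis p _ (fun m => ?_) y)
    rw [hep, hep]
    exact b.orthonormal.2 fun h => hij (congrArg Prod.fst h).symm
  · rw [← b.dense_span]
    refine Submodule.topologicalClosure_mono (Submodule.span_le.2 ?_)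
    rintro _ ⟨⟨i, n⟩, rfl⟩
    exact le_iSup (fun i => (e i).toLinearMap.range) i ⟨p n, hep i n⟩

theorem exists_comp_eq_of_mem_unitaryFixing_orthogonal (L : H →ₗᵢ[𝕜] H) {u : H ≃ₗᵢ[𝕜] H}
    (hu : u ∈ unitaryFixing 𝕜 (L.toLinearMap.rangeᗮ : Set H)) :
    ∃ T : H ≃ₗᵢ[𝕜] H, ∀ x, u (L x) = L (T x) := by
  have hclosed : IsClosed (L.toLinearMap.range : Set H) := by
    rw [LinearMap.coe_range]
    exact L.isometry.isClosedEmbedding.isClosed_range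
  have hle : ∀ w ∈ unitaryFixing 𝕜 (L.toLinearMap.rangeᗮ : Set H),
      ∀ y ∈ L.toLinearMap.range, w y ∈ L.toLinearMap.range := by
    intro w hw y hy
    rw [← hclosed.submodule_topologicalClosure_eq, ← Submodule.orthogonal_orthogonal_eq_closure,
      Submodule.mem_orthogonal]
    intro v hv
    rw [← hw v hv, w.inner_map_map]
    exact inner_eq_zero_symm.1 (hv y hy)
  have hmap : L.toLinearMap.range.map u.toLinearEquiv.toLinearMap = L.toLinearMap.range := by
    refine le_antisymm (Submodule.map_le_iff_le_comap.2 (hle u hu)) fun y hy => ?_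
    exact ⟨u⁻¹ y, hle _ (inv_mem hu) y hy, u.apply_symm_apply y⟩
  refine ⟨L.equivRange.trans ((u.submoduleMap _).trans
    ((LinearIsometryEquiv.ofEq _ _ hmap).trans L.equivRange.symm)), fun x => ?_⟩
  exact (congrArg Subtype.val (L.equivRange.apply_symm_apply ⟨u (L x), hle u hu _ ⟨x, rfl⟩⟩)).symm

end HilbertSum

section Swindle

variable {𝕜 H : Type*} [RCLike 𝕜] [NormedAddCommGroup H] [InnerProductSpace 𝕜 H] [CompleteSpace H]
  {I : Type*} {e : I → H →ₗᵢ[𝕜] H}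

/-- The permutation of `α × ℤ` translating the fibre over `a` by `d a`. -/
def fiberShift {α : Type*} (d : α → ℤ) : Equiv.Perm (α × ℤ) :=
  Equiv.prodShear (Equiv.refl α) fun a => Equiv.addRight (d a)

theorem fiberShift_apply {α : Type*} (d : α → ℤ) (a : α) (k : ℤ) :
    fiberShift d (a, k) = (a, k + d a) := rfl

theorem fiberShift_pow_apply {α : Type*} (d : α → ℤ) (a : α) (k : ℤ) (n : ℕ) :
    (fiberShift d ^ n) (a, k) = (a, k + n * d a) := by
  induction n with
  | zero => simp
  | succ n ih =>
    rw [pow_succ', Equiv.Perm.mul_apply, ih, fiberShift_apply]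
    push_cast
    ring_nf

theorem IsCountablySyndetic.exists_block {W : Set (H ≃ₗᵢ[𝕜] H)} (hW : IsCountablySyndetic W)
    (hsym : W⁻¹ = W) (he : IsHilbertSum 𝕜 (fun _ : I => H) e) (π : I → ℕ) :
    ∃ n, ∀ T : I → H ≃ₗᵢ[𝕜] H, ∃ D ∈ W ^ 2, ∀ i, π i = n → ∀ x, D (e i x) = e i (T i x) := by
  obtain ⟨s, hs⟩ := hW
  obtain ⟨n, hn⟩ : ∃ n, ∀ T : I → H ≃ₗᵢ[𝕜] H, ∃ D ∈ s n • W,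
      ∀ i, π i = n → ∀ x, D (e i x) = e i (T i x) := by
    by_contra! h
    choose T hT using h
    obtain ⟨u, hu⟩ := exists_unitary_monomial he 1 fun i => T (π i) i
    obtain ⟨n, hn⟩ := hs u
    obtain ⟨i, rfl, x, h⟩ := hT n u hn
    exact h (hu i x)
  refine ⟨n, fun T => ?_⟩
  obtain ⟨D₁, hD₁, h₁⟩ := hn 1
  obtain ⟨D, hD, h⟩ := hn T
  refine ⟨D₁⁻¹ * D, inv_mul_mem_sq_of_mem_smul hsym hD₁ hD, fun i hi x => ?_⟩
  exact D₁.symm_apply_eq.2 ((h i hi x).trans (h₁ i hi (T i x)).symm)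

theorem exists_eq_along_forward_orbit {X : Type*} {σ : Equiv.Perm I} {i₀ : I}
    (horbit : ∀ k : ℕ, (σ ^ (k + 1)) i₀ ≠ i₀) (x y : X) :
    ∃ S : I → X, S i₀ = x ∧ S (σ.symm i₀) = y ∧ ∀ i, σ i ≠ i₀ → S (σ i) = S i := by
  classical
  refine ⟨fun i => if ∃ k : ℕ, (σ ^ k) i₀ = i then x else y, if_pos ⟨0, rfl⟩, if_neg ?_,
    fun i hi => ?_⟩
  · rintro ⟨k, hk⟩
    exact horbit k (by rw [pow_succ', Equiv.Perm.mul_apply, hk, σ.apply_symm_apply])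
  · have hiff : (∃ k : ℕ, (σ ^ k) i₀ = σ i) ↔ ∃ k : ℕ, (σ ^ k) i₀ = i := by
      constructor
      · rintro ⟨_ | k, hk⟩
        · exact absurd hk.symm hi
        · exact ⟨k, σ.injective (by rwa [pow_succ', Equiv.Perm.mul_apply] at hk)⟩
      · rintro ⟨k, rfl⟩
        exact ⟨k + 1, by rw [pow_succ', Equiv.Perm.mul_apply]⟩
    simp only [hiff]

-- The swindle: `D` carries a copy of `S i₀` at every point of the forward orbit of `i₀`, and `g`
-- moves this orbit one step ahead, so that all copies but the one at `i₀` cancel.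
theorem commutator_eq_of_isHilbertSum (he : IsHilbertSum 𝕜 (fun _ : I => H) e)
    {σ : Equiv.Perm I} {A : Set I} (hσ : ∀ i ∉ A, σ i = i) {i₀ : I} (hi₀ : i₀ ∈ A)
    {S : I → H ≃ₗᵢ[𝕜] H} (hS₁ : S (σ.symm i₀) = 1) (hS : ∀ i, σ i ≠ i₀ → S (σ i) = S i)
    {u g D : H ≃ₗᵢ[𝕜] H} (hui₀ : ∀ x, u (e i₀ x) = e i₀ (S i₀ x))
    (hu : ∀ i ≠ i₀, ∀ x, u (e i x) = e i x) (hg : ∀ i x, g (e i x) = e (σ i) x)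
    (hD : ∀ i ∈ A, ∀ x, D (e i x) = e i (S i x)) : D * g * D⁻¹ * g⁻¹ = u := by
  rw [mul_inv_eq_iff_eq_mul, mul_inv_eq_iff_eq_mul]
  refine unitary_ext_of_isHilbertSum he fun i x => ?_
  change D (g (e i x)) = u (g (D (e i x)))
  by_cases hi : i ∈ A
  · have hσi : σ i ∈ A := by_contra fun h => h (by rwa [σ.injective (hσ _ h)])
    rw [hg, hD i hi, hg, hD _ hσi]
    obtain h | h := eq_or_ne (σ i) i₀
    · rw [h, hui₀, ← σ.symm_apply_eq.2 h.symm, hS₁]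
      rfl
    · rw [hu _ h, hS i h]
  · have horth : ∀ j ∈ A, ∀ y, ⟪e j y, D (e i x)⟫_𝕜 = 0 := fun j hj y => by
      rw [← (S j).apply_symm_apply y, ← hD j hj, D.inner_map_map]
      exact he.OrthogonalFamily (ne_of_mem_of_not_mem hj hi) _ _
    rw [hg, hσ i hi, unitary_apply_eq_self_of_isHilbertSum he (A := A) (u := g)
      (fun j hj y => by rw [hg, hσ j hj]) horth]
    exact (unitary_apply_eq_self_of_isHilbertSum he (A := {i₀}) hu
      (by rintro _ rfl; exact horth _ hi₀)).symm

theorem IsCountablySyndetic.exists_shift_mem_sq {W : Set (H ≃ₗᵢ[𝕜] H)}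
    (hW : IsCountablySyndetic W) (hsym : W⁻¹ = W) {α : Type*} {e : α × ℤ → H →ₗᵢ[𝕜] H}
    (he : IsHilbertSum 𝕜 (fun _ : α × ℤ => H) e) {ι : Type*} [Uncountable ι] (d : ι → α → ℤ) :
    ∃ i j, i ≠ j ∧ ∃ g ∈ W ^ 2, ∀ k x, g (e k x) = e (fiberShift (d j - d i) k) x := by
  choose t ht using fun i => exists_unitary_monomial he (fiberShift (d i)) 1
  obtain ⟨i, j, hne, hg⟩ := hW.exists_ne_inv_mul_mem_sq hsym t
  refine ⟨i, j, hne, _, hg, fun ⟨a, k⟩ x => (t i).symm_apply_eq.2 ((ht j _ x).trans ?_)⟩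
  simp only [ht, fiberShift_apply, Pi.sub_apply, Pi.one_apply, add_assoc, sub_add_cancel]

theorem IsCountablySyndetic.exists_isometry_unitaryFixing_orthogonal_subset
    [TopologicalSpace.SeparableSpace H] {W : Set (H ≃ₗᵢ[𝕜] H)} (hW : IsCountablySyndetic W)
    (hsym : W⁻¹ = W) (hinf : ¬ FiniteDimensional 𝕜 H) :
    ∃ L : H →ₗᵢ[𝕜] H, HasInfiniteCodim 𝕜 (Set.range L) ∧
      (unitaryFixing 𝕜 (L.toLinearMap.rangeᗮ : Set H) : Set (H ≃ₗᵢ[𝕜] H)) ⊆ W ^ 8 := by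
  obtain ⟨e, he⟩ := exists_isHilbertSum hinf ((ℕ × ℕ) × ℤ)
  obtain ⟨n, hn⟩ := hW.exists_block hsym he fun i => i.1.1
  have := uncountable_nat_fun ℤ
  obtain ⟨f, f', hne, g, hgW, hg⟩ := hW.exists_shift_mem_sq hsym he
    fun f : ℕ → ℤ => fun a : ℕ × ℕ => if a.1 = n then f a.2 else 0
  obtain ⟨m, hm⟩ := Function.ne_iff.1 hne
  set σ := fiberShift ((fun a : ℕ × ℕ => if a.1 = n then f' a.2 else 0) -
    fun a => if a.1 = n then f a.2 else 0)
  have hσ : ∀ i ∉ {i : (ℕ × ℕ) × ℤ | i.1.1 = n}, σ i = i := fun i hi => by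
    simp [σ, fiberShift, show ¬ i.1.1 = n from hi]
  have horbit : ∀ k : ℕ, (σ ^ (k + 1)) ((n, m), 0) ≠ ((n, m), 0) := fun k => by
    simpa [σ, fiberShift_pow_apply, sub_eq_zero] using ⟨by positivity, hm.symm⟩
  refine ⟨e ((n, m), 0), ?_, fun u hu => ?_⟩
  · obtain ⟨p⟩ := nonempty_hilbertBasis hinf ℕ
    refine hasInfiniteCodim_of_orthonormal
      (p.orthonormal.comp_linearIsometry (e ((n, m), 1))) ?_
    rintro _ ⟨x, rfl⟩ k
    exact he.OrthogonalFamily (by simp) _ _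
  obtain ⟨T, hT⟩ := exists_comp_eq_of_mem_unitaryFixing_orthogonal _ hu
  obtain ⟨S, rfl, hS₁, hS⟩ := exists_eq_along_forward_orbit horbit T 1
  obtain ⟨D, hDW, hD⟩ := hn S
  have hu' : ∀ i ≠ ((n, m), 0), ∀ x, u (e i x) = e i x := fun i hi x => by
    refine hu _ ?_
    rintro _ ⟨y, rfl⟩
    exact he.OrthogonalFamily hi.symm _ _
  rw [← commutator_eq_of_isHilbertSum he hσ rfl hS₁ hS hT hu' hg hD,
    show 8 = 2 + 2 + 2 + 2 from rfl, pow_add, pow_add, pow_add]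
  exact Set.mul_mem_mul (Set.mul_mem_mul (Set.mul_mem_mul hDW hgW)
    (inv_mem_pow_of_inv_eq_self hsym hDW)) (inv_mem_pow_of_inv_eq_self hsym hgW)

theorem IsCountablySyndetic.exists_orthonormal_unitaryFixing_subset
    [TopologicalSpace.SeparableSpace H] {W : Set (H ≃ₗᵢ[𝕜] H)} (hW : IsCountablySyndetic W)
    (hsym : W⁻¹ = W) (hinf : ¬ FiniteDimensional 𝕜 H) :
    ∃ m : ℕ → H, Orthonormal 𝕜 m ∧ HasInfiniteCodim 𝕜 (Set.range m) ∧
      (unitaryFixing 𝕜 (Set.range m) : Set (H ≃ₗᵢ[𝕜] H)) ⊆ W ^ 8 := by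
  obtain ⟨L, hL, hLW⟩ := hW.exists_isometry_unitaryFixing_orthogonal_subset hsym hinf
  rw [HasInfiniteCodim, ← LinearIsometry.coe_toLinearMap, ← LinearMap.coe_range,
    Submodule.span_eq] at hL
  obtain ⟨r⟩ := nonempty_hilbertBasis hL ℕ
  obtain ⟨p⟩ := nonempty_hilbertBasis hinf ℕ
  refine ⟨fun n => r n, r.orthonormal.comp_linearIsometry (Submodule.subtypeₗᵢ _),
    hasInfiniteCodim_of_orthonormal (p.orthonormal.comp_linearIsometry L) ?_, fun u hu => hLW ?_⟩
  · rintro _ ⟨n, rfl⟩ k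
    exact inner_eq_zero_symm.1 ((r n).2 _ ⟨p k, rfl⟩)
  · intro v hv
    exact DFunLike.congr_fun (continuousLinearMap_ext_hilbertBasis r
      (f := u.toLinearIsometry.toContinuousLinearMap.comp (Submodule.subtypeL _))
      (g := Submodule.subtypeL _) fun n => hu _ ⟨n, rfl⟩) ⟨v, hv⟩

end Swindle

section AlmostDisjoint

theorem res_injective (f : ℕ → ℕ) : Function.Injective (PiNat.res f) := fun m n h => by
  simpa [PiNat.res_length] using congrArg List.length h

theorem finite_range_res_inter_range_res {f f' : ℕ → ℕ} (h : f ≠ f') :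
    (Set.range (PiNat.res f) ∩ Set.range (PiNat.res f')).Finite := by
  obtain ⟨k, hk⟩ := Function.ne_iff.1 h
  refine ((Set.finite_Iic k).image (PiNat.res f)).subset ?_
  rintro _ ⟨⟨n, rfl⟩, n', h'⟩
  have hn : n' = n := by simpa [PiNat.res_length] using congrArg List.length h'
  subst hn
  exact ⟨n', not_lt.1 fun hlt => hk (PiNat.res_eq_res.1 h' hlt).symm, rfl⟩

theorem infinite_compl_range_res_union_range_res (f f' : ℕ → ℕ) :
    (Set.range (PiNat.res f) ∪ Set.range (PiNat.res f'))ᶜ.Infinite := by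
  refine Set.infinite_of_injective_forall_mem (f := fun k => [f 0 + f' 0 + 1 + k])
    (fun k l h => by simpa using h) fun k => ?_
  have hne : ∀ (g : ℕ → ℕ) n, PiNat.res g n = [f 0 + f' 0 + 1 + k] → g 0 = f 0 + f' 0 + 1 + k := by
    intro g n h
    obtain rfl : n = 1 := by simpa [PiNat.res_length] using congrArg List.length h
    simpa using h
  rintro (⟨n, h⟩ | ⟨n, h⟩)
  · have := hne f n h
    omega
  · have := hne f' n h
    omega

variable {𝕜 H : Type*} [RCLike 𝕜] [NormedAddCommGroup H] [InnerProductSpace 𝕜 H] [CompleteSpace H]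
  [TopologicalSpace.SeparableSpace H]

theorem IsCountablySyndetic.exists_hilbertBasis_unitaryFixing_subset {W : Set (H ≃ₗᵢ[𝕜] H)}
    (hW : IsCountablySyndetic W) (hsym : W⁻¹ = W) (hinf : ¬ FiniteDimensional 𝕜 H) :
    ∃ (b : HilbertBasis (List ℕ) 𝕜 H) (A B : Set (List ℕ)),
      (A ∩ B).Finite ∧ (A ∪ B)ᶜ.Infinite ∧
        (unitaryFixing 𝕜 (b '' A) : Set (H ≃ₗᵢ[𝕜] H)) ⊆ W ^ 10 ∧
        (unitaryFixing 𝕜 (b '' B) : Set (H ≃ₗᵢ[𝕜] H)) ⊆ W ^ 10 := by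
  obtain ⟨m, hm, hmcodim, hmW⟩ := hW.exists_orthonormal_unitaryFixing_subset hsym hinf
  obtain ⟨b⟩ := nonempty_hilbertBasis hinf (List ℕ)
  have hmove : ∀ f : ℕ → ℕ, ∃ t : H ≃ₗᵢ[𝕜] H, ∀ n, t (m n) = b (PiNat.res f n) := fun f => by
    have hbf := b.orthonormal.comp _ (res_injective f)
    refine exists_unitary_map_eq_of_hasInfiniteCodim (fun i j => ?_) hmcodim ?_
    · rw [orthonormal_iff_ite.1 hm i j]
      exact (orthonormal_iff_ite.1 hbf i j).symm
    · rw [Set.range_comp' b]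
      refine hasInfiniteCodim_image b.orthonormal
        ((infinite_compl_range_res_union_range_res f f).mono ?_)
      rw [Set.union_self]
  choose t ht using hmove
  have := uncountable_nat_fun ℕ
  obtain ⟨f, f', hne, g, hf, hf'⟩ := hW.exists_ne_mem_smul t
  have hfix : ∀ f, t f ∈ g • W →
      (unitaryFixing 𝕜 ((fun l => g⁻¹ (b l)) '' Set.range (PiNat.res f)) : Set (H ≃ₗᵢ[𝕜] H))
        ⊆ W ^ 10 := fun f hf => by
    have hmem : g⁻¹ * t f ∈ W ^ 1 := by
      rw [pow_one]
      exact Set.mem_smul_set_iff_inv_smul_mem.1 hf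
    convert! unitaryFixing_image_subset_pow hsym hmW hmem using 4
    rw [← Set.range_comp, ← Set.range_comp]
    exact congrArg Set.range (funext fun n => congrArg (g⁻¹ : H ≃ₗᵢ[𝕜] H) (ht f n).symm)
  refine ⟨.ofRepr (g.trans b.repr), Set.range (PiNat.res f), Set.range (PiNat.res f'),
    finite_range_res_inter_range_res hne, infinite_compl_range_res_union_range_res f f', ?_, ?_⟩
  · exact hfix f hf
  · exact hfix f' hf'

end AlmostDisjoint

section Selection

variable {𝕜 H : Type*} [RCLike 𝕜] [NormedAddCommGroup H] [InnerProductSpace 𝕜 H]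

theorem exists_ne_zero_mem_orthogonal {K : Submodule 𝕜 H} (hK : ¬ FiniteDimensional 𝕜 K)
    (s : Finset H) : ∃ z ∈ K, z ≠ 0 ∧ ∀ x ∈ s, ⟪x, z⟫_𝕜 = 0 := by
  let f : K →ₗ[𝕜] (s → 𝕜) :=
    LinearMap.pi fun x => (innerSL 𝕜 (x : H)).toLinearMap ∘ₗ K.subtype
  have hf : ¬ Function.Injective f := fun h => hK (FiniteDimensional.of_injective f h)
  rw [injective_iff_map_eq_zero] at hf
  push Not at hf
  obtain ⟨z, hfz, hz⟩ := hf
  exact ⟨z, z.2, fun h => hz (Subtype.ext h), fun x hx => congrFun hfz ⟨x, hx⟩⟩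

theorem exists_norm_eq_one_mem_orthogonal {K : Submodule 𝕜 H} (hK : ¬ FiniteDimensional 𝕜 K)
    (s : Finset H) : ∃ z ∈ K, ‖z‖ = 1 ∧ ∀ x ∈ s, ⟪x, z⟫_𝕜 = 0 := by
  obtain ⟨z, hzK, hz, hs⟩ := exists_ne_zero_mem_orthogonal hK s
  exact ⟨((‖z‖⁻¹ : ℝ) : 𝕜) • z, K.smul_mem _ hzK, by simpa using norm_smul_inv_norm (𝕜 := 𝕜) hz,
    fun x hx => by rw [inner_smul_right, hs x hx, mul_zero]⟩

theorem exists_seq_orthonormal_mem {K : ℕ → Submodule 𝕜 H}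
    (hK : ∀ n, ¬ FiniteDimensional 𝕜 (K n)) :
    ∃ z : ℕ → H, Orthonormal 𝕜 z ∧ ∀ n, z n ∈ K n := by
  classical
  choose next hmem hnorm horth using fun n => exists_norm_eq_one_mem_orthogonal (hK n)
  let S : ℕ → Finset H := Nat.rec ∅ fun n s => insert (next n s) s
  have hS : Monotone S := monotone_nat_of_le_succ fun n => Finset.subset_insert _ _
  have hlt : ∀ {m n}, m < n → ⟪next m (S m), next n (S n)⟫_𝕜 = 0 := fun {m n} h =>
    horth n _ _ (hS h (Finset.mem_insert_self _ _))
  refine ⟨fun n => next n (S n), ⟨fun n => hnorm n _, fun m n h => ?_⟩, fun n => hmem n _⟩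
  obtain h | h := h.lt_or_gt
  · exact hlt h
  · exact inner_eq_zero_symm.1 (hlt h)

theorem exists_orthonormal_mem {ι : Type*} [Countable ι] {K : ι → Submodule 𝕜 H}
    (hK : ∀ i, ¬ FiniteDimensional 𝕜 (K i)) : ∃ z : ι → H, Orthonormal 𝕜 z ∧ ∀ i, z i ∈ K i := by
  cases isEmpty_or_nonempty ι
  · exact ⟨isEmptyElim, ⟨isEmptyElim, fun i => isEmptyElim i⟩, isEmptyElim⟩
  obtain ⟨σ, hσ⟩ := exists_surjective_nat ι
  obtain ⟨z, hz, hzK⟩ := exists_seq_orthonormal_mem fun n => hK (σ n)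
  refine ⟨z ∘ Function.surjInv hσ, hz.comp _ (Function.injective_surjInv hσ), fun i => ?_⟩
  simpa only [Function.comp_apply, Function.surjInv_eq hσ i] using hzK (Function.surjInv hσ i)

end Selection

section Factorization

variable {𝕜 H : Type*} [RCLike 𝕜] [NormedAddCommGroup H] [InnerProductSpace 𝕜 H] [CompleteSpace H]
  [TopologicalSpace.SeparableSpace H] {I : Type*} {b : I → H} {A B : Set I}

theorem exists_mem_unitaryFixing_image_map_eq (hb : Orthonormal 𝕜 b) (hAB : (A ∪ B)ᶜ.Infinite)
    {q : (A \ B : Set I) ⊕ ℕ → H} (hq : Orthonormal 𝕜 q)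
    (hBq : ∀ i ∈ B, ∀ k, ⟪b i, q k⟫_𝕜 = 0) :
    ∃ a ∈ unitaryFixing 𝕜 (b '' B), ∀ i, a (q (.inl i)) = b i := by
  classical
  have hqA := hq.comp _ Sum.inl_injective
  have hbA := hb.comp ((↑) : (A \ B : Set I) → I) Subtype.val_injective
  refine exists_mem_unitaryFixing_map_eq (a := fun i => q (.inl i)) (b := fun i => b i)
    (fun i j => (orthonormal_iff_ite.1 hqA i j).trans (orthonormal_iff_ite.1 hbA i j).symm)
    ?_ ?_ ?_
  · rintro _ ⟨j, hj, rfl⟩ i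
    rw [hBq j hj, hb.2 fun h : j = i => i.2.2 (h ▸ hj)]
  · refine hasInfiniteCodim_of_orthonormal (hq.comp _ Sum.inr_injective) ?_
    rintro _ (⟨i, rfl⟩ | ⟨j, hj, rfl⟩) n
    · exact hq.2 Sum.inl_ne_inr
    · exact hBq j hj _
  · refine (hasInfiniteCodim_image hb hAB).mono ?_
    rintro _ (⟨i, rfl⟩ | ⟨j, hj, rfl⟩)
    · exact ⟨i, .inl i.2.1, rfl⟩
    · exact ⟨j, .inr hj, rfl⟩

theorem exists_mem_unitaryFixing_hasInfiniteCodim_union_image [Countable I]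
    (hb : Orthonormal 𝕜 b) (hAB : (A ∪ B)ᶜ.Infinite) {Y : Set H} (hY : HasInfiniteCodim 𝕜 Y)
    (hABY : b '' (A ∩ B) ⊆ Y) :
    ∃ a ∈ unitaryFixing 𝕜 (b '' B), HasInfiniteCodim 𝕜 (b '' A ∪ a '' Y) := by
  have hB : HasInfiniteCodim 𝕜 (b '' B) :=
    (hasInfiniteCodim_image hb hAB).mono (Set.image_mono Set.subset_union_right)
  obtain ⟨z, hz, hzK⟩ := exists_orthonormal_mem (ι := ((A \ B : Set I) ⊕ ℕ) ⊕ ℕ)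
    (K := Sum.elim (fun _ => (Submodule.span 𝕜 (b '' B))ᗮ) fun _ => (Submodule.span 𝕜 Y)ᗮ)
    (by rintro (_ | _); exacts [hB, hY])
  have hzB : ∀ i ∈ B, ∀ k, ⟪b i, z (.inl k)⟫_𝕜 = 0 := fun i hi k =>
    mem_orthogonal_span_iff.1 (hzK (.inl k)) _ ⟨i, hi, rfl⟩
  have hzY : ∀ y ∈ Y, ∀ n, ⟪y, z (.inr n)⟫_𝕜 = 0 := fun y hy n =>
    mem_orthogonal_span_iff.1 (hzK (.inr n)) y hy
  obtain ⟨a, haB, ha⟩ :=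
    exists_mem_unitaryFixing_image_map_eq hb hAB (hz.comp _ Sum.inl_injective) hzB
  refine ⟨a, haB, hasInfiniteCodim_of_orthonormal
    ((hz.comp _ Sum.inr_injective).comp_linearIsometry a.toLinearIsometry) ?_⟩
  rintro _ (⟨i, hiA, rfl⟩ | ⟨y, hy, rfl⟩) n
  · by_cases hiB : i ∈ B
    · rw [← haB _ ⟨i, hiB, rfl⟩]
      exact (a.inner_map_map _ _).trans (hzY _ (hABY ⟨i, ⟨hiA, hiB⟩, rfl⟩) n)
    · rw [← ha ⟨i, hiA, hiB⟩]
      exact (a.inner_map_map _ _).trans (hz.2 Sum.inl_ne_inr)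
  · exact (a.inner_map_map _ _).trans (hzY y hy n)

theorem exists_mem_unitaryFixing_inner_eq_zero [Countable I] (hb : Orthonormal 𝕜 b)
    (hAB : (A ∪ B)ᶜ.Infinite) {Y : Set H} (hY : HasInfiniteCodim 𝕜 (b '' A ∪ Y)) :
    ∃ a ∈ unitaryFixing 𝕜 (b '' A), HasInfiniteCodim 𝕜 (b '' B ∪ a '' Y) ∧
      ∀ j ∈ B \ A, ∀ y ∈ Y, ⟪b j, a y⟫_𝕜 = 0 := by
  obtain ⟨q, hq, hqK⟩ := exists_orthonormal_mem (ι := (B \ A : Set I) ⊕ ℕ)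
    (K := fun _ => (Submodule.span 𝕜 (b '' A ∪ Y))ᗮ) fun _ => hY
  have hqAY : ∀ x ∈ b '' A ∪ Y, ∀ k, ⟪x, q k⟫_𝕜 = 0 := fun x hx k =>
    mem_orthogonal_span_iff.1 (hqK k) x hx
  obtain ⟨a, haA, ha⟩ := exists_mem_unitaryFixing_image_map_eq hb (Set.union_comm A B ▸ hAB) hq
    fun i hi => hqAY _ (.inl ⟨i, hi, rfl⟩)
  refine ⟨a, haA, hasInfiniteCodim_of_orthonormal
    ((hq.comp _ Sum.inr_injective).comp_linearIsometry a.toLinearIsometry) ?_, fun j hj y hy => ?_⟩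
  · rintro _ (⟨j, hjB, rfl⟩ | ⟨y, hy, rfl⟩) n
    · by_cases hjA : j ∈ A
      · rw [← haA _ ⟨j, hjA, rfl⟩]
        exact (a.inner_map_map _ _).trans (hqAY _ (.inl ⟨j, hjA, rfl⟩) _)
      · rw [← ha ⟨j, hjB, hjA⟩]
        exact (a.inner_map_map _ _).trans (hq.2 Sum.inl_ne_inr)
    · exact (a.inner_map_map _ _).trans (hqAY y (.inr hy) _)
  · rw [← ha ⟨j, hj⟩, a.inner_map_map, inner_eq_zero_symm]
    exact hqAY y (.inr hy) _

theorem exists_mem_unitaryFixing_mul_mem_unitaryFixing (hb : Orthonormal 𝕜 b)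
    (hAB : (A ∪ B)ᶜ.Infinite) {v : H ≃ₗᵢ[𝕜] H} (hv : v ∈ unitaryFixing 𝕜 (b '' (A ∩ B)))
    (hinf : HasInfiniteCodim 𝕜 (b '' B ∪ v '' (b '' A)))
    (horth : ∀ j ∈ B \ A, ∀ i ∈ A, ⟪b j, v (b i)⟫_𝕜 = 0) :
    ∃ a ∈ unitaryFixing 𝕜 (b '' B), a * v ∈ unitaryFixing 𝕜 (b '' A) := by
  have hvb : ∀ i ∈ A ∩ B, v (b i) = b i := fun i hi => hv _ ⟨i, hi, rfl⟩
  obtain ⟨a, haB, ha⟩ := exists_mem_unitaryFixing_map_eq (𝕜 := 𝕜) (X := b '' B)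
    (a := fun i : (A \ B : Set I) => v (b i)) (b := fun i => b i)
    (fun i j => v.inner_map_map _ _) (by
      rintro _ ⟨j, hjB, rfl⟩ ⟨i, hiA, hiB⟩
      by_cases hjA : j ∈ A
      · have := v.inner_map_map (b j) (b i)
        rwa [hvb j ⟨hjA, hjB⟩] at this
      · exact (horth j ⟨hjB, hjA⟩ i hiA).trans (hb.2 fun h : j = i => hiB (h ▸ hjB)).symm)
    (hinf.mono (by
      rintro _ (⟨i, rfl⟩ | hx)
      exacts [.inr ⟨b i, ⟨i, i.2.1, rfl⟩, rfl⟩, .inl hx]))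
    ((hasInfiniteCodim_image hb hAB).mono (by
      rintro _ (⟨i, rfl⟩ | ⟨j, hj, rfl⟩)
      exacts [⟨i, .inl i.2.1, rfl⟩, ⟨j, .inr hj, rfl⟩]))
  refine ⟨a, haB, ?_⟩
  rintro _ ⟨i, hiA, rfl⟩
  by_cases hiB : i ∈ B
  · exact (congrArg a (hvb i ⟨hiA, hiB⟩)).trans (haB _ ⟨i, hiB, rfl⟩)
  · exact ha ⟨i, hiA, hiB⟩

theorem unitaryFixing_inter_subset_mul [Countable I] (hb : Orthonormal 𝕜 b)
    (hAB : (A ∪ B)ᶜ.Infinite) :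
    (unitaryFixing 𝕜 (b '' (A ∩ B)) : Set (H ≃ₗᵢ[𝕜] H)) ⊆
      unitaryFixing 𝕜 (b '' B) * unitaryFixing 𝕜 (b '' A) *
        unitaryFixing 𝕜 (b '' B) * unitaryFixing 𝕜 (b '' A) := by
  intro u hu
  have hA : HasInfiniteCodim 𝕜 (b '' A) :=
    (hasInfiniteCodim_image hb hAB).mono (Set.image_mono Set.subset_union_left)
  obtain ⟨a₀, ha₀, hinf₀⟩ := exists_mem_unitaryFixing_hasInfiniteCodim_union_image hb hAB
    (hA.image u) fun x hx => ⟨x, Set.image_mono Set.inter_subset_left hx, hu x hx⟩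
  obtain ⟨a₁, ha₁, hinf₁, horth⟩ := exists_mem_unitaryFixing_inner_eq_zero hb hAB hinf₀
  have hv : a₁ * a₀ * u ∈ unitaryFixing 𝕜 (b '' (A ∩ B)) :=
    mul_mem (mul_mem (unitaryFixing_anti (Set.image_mono Set.inter_subset_left) ha₁)
      (unitaryFixing_anti (Set.image_mono Set.inter_subset_right) ha₀)) hu
  obtain ⟨a₂, ha₂, ha₃⟩ := exists_mem_unitaryFixing_mul_mem_unitaryFixing hb hAB hv
    (by simpa only [Set.image_image, LinearIsometryEquiv.coe_mul, Function.comp_apply] using hinf₁)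
    fun j hj i hi => horth j hj _ ⟨_, ⟨_, ⟨i, hi, rfl⟩, rfl⟩, rfl⟩
  rw [show u = a₀⁻¹ * a₁⁻¹ * a₂⁻¹ * (a₂ * (a₁ * a₀ * u)) by group]
  exact Set.mul_mem_mul (Set.mul_mem_mul (Set.mul_mem_mul (inv_mem ha₀) (inv_mem ha₁))
    (inv_mem ha₂)) ha₃

theorem IsCountablySyndetic.exists_finiteDimensional_unitaryFixing_subset
    {W : Set (H ≃ₗᵢ[𝕜] H)} (hW : IsCountablySyndetic W) (hsym : W⁻¹ = W)
    (hinf : ¬ FiniteDimensional 𝕜 H) :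
    ∃ F : Submodule 𝕜 H, FiniteDimensional 𝕜 F ∧
      (unitaryFixing 𝕜 (F : Set H) : Set (H ≃ₗᵢ[𝕜] H)) ⊆ W ^ 40 := by
  obtain ⟨b, A, B, hfin, hc, hA, hB⟩ := hW.exists_hilbertBasis_unitaryFixing_subset hsym hinf
  refine ⟨Submodule.span 𝕜 (b '' (A ∩ B)), .span_of_finite 𝕜 (hfin.image b), fun u hu => ?_⟩
  rw [show 40 = 10 + 10 + 10 + 10 from rfl, pow_add, pow_add, pow_add]
  exact Set.mul_subset_mul (Set.mul_subset_mul (Set.mul_subset_mul hB hA) hB) hA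
    (unitaryFixing_inter_subset_mul b.orthonormal hc
      (unitaryFixing_anti Submodule.subset_span hu))

end Factorization

section RotationPair

/-- The operator equations saying that `h * k * h` has first column `(v, 0)`, where `k` is the
block matrix `diag(1, w)` and `h` is `diag(1, z)` conjugated by the rotation with cosine `C` and
sine `S`, i.e. `h = [[C² + S² z, S C (1 - z)], [S C (1 - z), S² + C² z]]`. -/
structure IsRotationPair {K R : Type*} [CommRing K] [Ring R] [Algebra K R] (C S : K) (v z w : R) :
    Prop where
  fst_eq : (C ^ 2 • 1 + S ^ 2 • z) * (C ^ 2 • 1 + S ^ 2 • z) +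
    (S * C) ^ 2 • ((1 - z) * w * (1 - z)) = v
  snd_eq : (1 - z) * (C ^ 2 • 1 + S ^ 2 • z) + (S ^ 2 • 1 + C ^ 2 • z) * w * (1 - z) = 0

theorem isRotationPair_mul_self {K R : Type*} [CommRing K] [CommRing R] [Algebra K R] {C S : K}
    (hCS : C ^ 2 + S ^ 2 = 1) {x x' y y' : R} (hx : x' * x = 1) (hy : y' * y = 1)
    (hxy : S ^ 2 • (y - y') = C ^ 2 • (x - x')) :
    IsRotationPair C S (x * x) (x * y) (-(y' * x)) := by
  have hCS' := congrArg (algebraMap K R) hCS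
  simp only [Algebra.smul_def, map_pow, map_add, map_one] at hCS' hxy
  set c := algebraMap K R C
  set s := algebraMap K R S
  have hK : c ^ 2 + s ^ 2 * (x * y) - s ^ 2 * (x * y') - c ^ 2 * (x * x) = 0 := by
    linear_combination x * hxy - c ^ 2 * hx
  constructor <;> simp only [Algebra.smul_def, map_mul, map_pow]
  · linear_combination (c ^ 2 + s ^ 2 * (x * y)) * hK +
      x ^ 2 * (c ^ 2 + s ^ 2 + 1) * hCS' + (s ^ 4 * x ^ 2 +
      2 * s ^ 2 * c ^ 2 * x ^ 2 - s ^ 2 * c ^ 2 * x ^ 3 * y) * hy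
  · linear_combination (1 - x * y) * (x * hxy - c ^ 2 * hx - c ^ 2 * x ^ 2 * hy)

variable {A : Type*} [CStarAlgebra A]

theorem norm_sub_star_eq_of_mem_unitary {x : A} (hx : x ∈ unitary A) :
    ‖x - star x‖ = ‖x * x - 1‖ := by
  rw [← CStarRing.norm_mem_unitary_mul (x - star x) hx, mul_sub, hx.2]

theorem exists_mem_unitary_mul_self_eq {v : A} (hv : v ∈ unitary A) (hv2 : ‖v - 1‖ < 2) :
    ∃ x ∈ unitary A, x * x = v := by
  let h := Unitary.argSelfAdjoint ⟨v, hv⟩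
  let x := selfAdjoint.expUnitary ((1 / 2 : ℝ) • h)
  refine ⟨x, x.2, ?_⟩
  have : x * x = ⟨v, hv⟩ := by
    rw [← (Commute.refl (((1 / 2 : ℝ) • h : selfAdjoint A) : A)).expUnitary_add, ← add_smul,
      add_halves, one_smul, expUnitary_argSelfAdjoint hv2]
  exact congrArg Subtype.val this

theorem exists_mem_unitary_sub_star_eq {b : A} (hb : star b = -b) (hb2 : ‖b‖ ≤ 2) :
    ∃ y ∈ unitary A, y - star y = b := by
  let := CStarAlgebra.spectralOrder A
  let := CStarAlgebra.spectralOrderedRing A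
  let a : A := (-Complex.I / 2) • b
  have ha : IsSelfAdjoint a := by simp [a, IsSelfAdjoint, hb, neg_div]
  have ha1 : ‖a‖ ≤ 1 := by
    rw [norm_smul, norm_div, norm_neg, Complex.norm_I, Complex.norm_two]
    linarith
  let s := CFC.sqrt (1 - a ^ 2)
  have hs : star s = s := (CFC.sqrt_nonneg _).isSelfAdjoint
  refine ⟨Complex.I • (a + Complex.I • s), ?_, ?_⟩
  · exact Unitary.smul_mem_of_mem (by simp [Unitary.mem_iff])
      (ha.self_add_I_smul_cfcSqrt_sub_sq_mem_unitary a ha1)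
  · have hab : (2 * Complex.I) • a = b := by
      rw [smul_smul, show 2 * Complex.I * (-Complex.I / 2) = 1 by
        linear_combination -Complex.I_mul_I, one_smul]
    rw [← hab]
    simp only [star_smul, star_add, ha.star_eq, hs, RCLike.star_def, Complex.conj_I]
    module

theorem exists_isRotationPair_of_comm {B : Type*} [CommCStarAlgebra B] {C S : ℝ} (hS : S ≠ 0)
    (hCS : C ^ 2 + S ^ 2 = 1) {v : B} (hv : v ∈ unitary B) (hv1 : ‖v - 1‖ ≤ S ^ 2) :
    ∃ z ∈ unitary B, ∃ w ∈ unitary B, IsRotationPair (C : ℂ) (S : ℂ) v z w := by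
  have hS' : (S : ℂ) ≠ 0 := by exact_mod_cast hS
  have hS2 : 0 < S ^ 2 := by positivity
  obtain ⟨x, hx, rfl⟩ := exists_mem_unitary_mul_self_eq hv (by nlinarith)
  obtain ⟨y, hy, hyx⟩ := exists_mem_unitary_sub_star_eq
    (b := ((C : ℂ) ^ 2 / (S : ℂ) ^ 2) • (x - star x)) (by simp [← smul_neg]) (by
      rw [norm_smul, norm_sub_star_eq_of_mem_unitary hx, norm_div, norm_pow, norm_pow,
        Complex.norm_real, Complex.norm_real, Real.norm_eq_abs, Real.norm_eq_abs, sq_abs, sq_abs]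
      calc C ^ 2 / S ^ 2 * ‖x * x - 1‖ ≤ C ^ 2 / S ^ 2 * S ^ 2 := by gcongr
        _ = C ^ 2 := div_mul_cancel₀ _ hS2.ne'
        _ ≤ 2 := by linarith)
  have hw : star y * x ∈ unitary B := mul_mem (Unitary.star_mem hy) hx
  refine ⟨x * y, mul_mem hx hy, -(star y * x), (-⟨star y * x, hw⟩ : unitary B).2,
    isRotationPair_mul_self (by exact_mod_cast hCS) hx.1 hy.1 ?_⟩
  rw [hyx, smul_smul, mul_div_cancel₀ _ (pow_ne_zero 2 hS')]

theorem exists_isRotationPair {C S : ℝ} (hS : S ≠ 0) (hCS : C ^ 2 + S ^ 2 = 1) {v : A}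
    (hv : v ∈ unitary A) (hv1 : ‖v - 1‖ ≤ S ^ 2) :
    ∃ z ∈ unitary A, ∃ w ∈ unitary A, IsRotationPair (C : ℂ) (S : ℂ) v z w := by
  have := isStarNormal_of_mem_unitary hv
  let v' : StarAlgebra.elemental ℂ v := ⟨v, StarAlgebra.elemental.self_mem ℂ v⟩
  obtain ⟨z, hz, w, hw, h⟩ := exists_isRotationPair_of_comm hS hCS (v := v')
    ⟨Subtype.ext hv.1, Subtype.ext hv.2⟩ hv1
  exact ⟨z, ⟨congrArg Subtype.val hz.1, congrArg Subtype.val hz.2⟩, w,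
    ⟨congrArg Subtype.val hw.1, congrArg Subtype.val hw.2⟩, congrArg Subtype.val h.fst_eq,
    congrArg Subtype.val h.snd_eq⟩

end RotationPair

section PolarDecomposition

variable {A : Type*} [CStarAlgebra A] [PartialOrder A] [StarOrderedRing A]

theorem exists_mem_unitary_mul_abs {c : A} (hc : IsUnit c) :
    ∃ v ∈ unitary A, v * CFC.abs c = c := by
  have hp : IsUnit (CFC.abs c) := by
    rw [← isUnit_mul_self_iff, CFC.abs_mul_abs]
    exact hc.star.mul hc
  have hps : star (CFC.abs c) = CFC.abs c := (CFC.abs_nonneg c).isSelfAdjoint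
  obtain ⟨p, hp⟩ := hp
  have hinv : star (↑p⁻¹ : A) = ↑p⁻¹ := by
    rw [← Units.coe_star, star_inv]
    congr 2
    exact Units.ext (by rw [Units.coe_star, hp, hps])
  have hvv : star (c * ↑p⁻¹) * (c * ↑p⁻¹) = 1 := by
    rw [star_mul, hinv, mul_assoc, ← mul_assoc (star c), ← CFC.abs_mul_abs, ← hp]
    simp
  exact ⟨c * ↑p⁻¹, (hc.mul p⁻¹.isUnit).mem_unitary_of_star_mul_self hvv,
    by rw [← hp, Units.inv_mul_cancel_right]⟩

theorem abs_le_one_of_norm_le_one {c : A} (hc : ‖c‖ ≤ 1) : CFC.abs c ≤ 1 := by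
  rwa [← CStarAlgebra.norm_le_one_iff_of_nonneg _ (CFC.abs_nonneg c), CFC.norm_abs]

theorem norm_one_sub_abs_le {c : A} (hc : ‖c‖ ≤ 1) : ‖1 - CFC.abs c‖ ≤ 2 * ‖c - 1‖ := by
  have hp1 := abs_le_one_of_norm_le_one hc
  have hle : 1 - CFC.abs c ≤ 1 - star c * c := by
    have := CStarAlgebra.pow_antitone (CFC.abs_nonneg c) hp1 one_le_two
    simp only [pow_one, pow_two, CFC.abs_mul_abs] at this
    exact sub_le_sub_left this 1
  calc ‖1 - CFC.abs c‖ ≤ ‖1 - star c * c‖ :=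
        CStarAlgebra.norm_le_norm_of_nonneg_of_le (sub_nonneg.2 hp1) hle
    _ = ‖star c * (1 - c) + star (1 - c)‖ := by
        rw [star_sub, star_one]; noncomm_ring
    _ ≤ ‖star c‖ * ‖1 - c‖ + ‖star (1 - c)‖ := (norm_add_le _ _).trans (by grw [norm_mul_le])
    _ ≤ 2 * ‖c - 1‖ := by
        rw [norm_star, norm_star, norm_sub_rev 1 c]
        nlinarith [norm_nonneg (c - 1)]

theorem exists_star_mul_add_star_mul_eq_one {p : A} (hp1 : p ≤ 1) {r : ℝ} (hr : 0 < r)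
    (hpr : ‖1 - p‖ ≤ r) :
    ∃ d e : A, star d * d + star e * e = 1 ∧ 1 - (r : ℂ) • (1 - d) = p := by
  have hq0 : 0 ≤ r⁻¹ • (1 - p) := smul_nonneg (by positivity) (sub_nonneg.2 hp1)
  have hq1 : r⁻¹ • (1 - p) ≤ 1 := by
    rwa [← CStarAlgebra.norm_le_one_iff_of_nonneg _ hq0, norm_smul, norm_inv,
      Real.norm_of_nonneg hr.le, inv_mul_le_iff₀ hr, mul_one]
  set d : A := 1 - r⁻¹ • (1 - p) with hd
  have hd0 : 0 ≤ d := sub_nonneg.2 hq1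
  have hdd : 0 ≤ 1 - d * d := by
    have := CStarAlgebra.pow_antitone hd0 (sub_le_self 1 hq0) zero_le_two
    simp only [pow_zero, pow_two] at this
    exact sub_nonneg.2 this
  refine ⟨d, CFC.sqrt (1 - d * d), ?_, ?_⟩
  · rw [hd0.isSelfAdjoint, (CFC.sqrt_nonneg _).isSelfAdjoint, CFC.sqrt_mul_sqrt_self _ hdd,
      add_sub_cancel]
  · rw [hd, sub_sub_cancel, Complex.coe_smul, smul_inv_smul₀ hr.ne', sub_sub_cancel]

theorem exists_mem_unitary_mul_one_sub_smul {r : ℝ} (hr : 0 < r) (hr1 : r ≤ 1) {c : A}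
    (hc : ‖c‖ ≤ 1) (hc1 : ‖c - 1‖ < r / 3) :
    ∃ v ∈ unitary A, ‖v - 1‖ ≤ r ∧ ∃ d e : A, star d * d + star e * e = 1 ∧
      c = v * (1 - (r : ℂ) • (1 - d)) := by
  have hp := norm_one_sub_abs_le hc
  have hcu : IsUnit c := by
    have := isUnit_one_sub_of_norm_lt_one (x := 1 - c) (by rw [norm_sub_rev]; linarith)
    rwa [sub_sub_cancel] at this
  obtain ⟨v, hv, hvc⟩ := exists_mem_unitary_mul_abs hcu
  obtain ⟨d, e, hde, hd⟩ := exists_star_mul_add_star_mul_eq_one (abs_le_one_of_norm_le_one hc) hr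
    (by linarith)
  refine ⟨v, hv, ?_, d, e, hde, by rw [hd, hvc]⟩
  calc ‖v - 1‖ = ‖v * (1 - CFC.abs c) + (c - 1)‖ := by rw [mul_sub, hvc]; noncomm_ring
    _ ≤ ‖v * (1 - CFC.abs c)‖ + ‖c - 1‖ := norm_add_le _ _
    _ = ‖1 - CFC.abs c‖ + ‖c - 1‖ := by rw [CStarRing.norm_mem_unitary_mul _ hv]
    _ ≤ r := by linarith

end PolarDecomposition

section Rotation

variable {𝕜 E H : Type*} [RCLike 𝕜] [NormedAddCommGroup E] [InnerProductSpace 𝕜 E]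
  [NormedAddCommGroup H] [InnerProductSpace 𝕜 H] {P Q R : E →ₗᵢ[𝕜] H}

theorem inner_cos_smul_add_sin_smul (hPQ : ∀ x y, ⟪P x, Q y⟫_𝕜 = 0) (α β : ℝ) (x y : E) :
    ⟪(Real.cos α : 𝕜) • P x + (Real.sin α : 𝕜) • Q x,
      (Real.cos β : 𝕜) • P y + (Real.sin β : 𝕜) • Q y⟫_𝕜 = (Real.cos (α - β) : 𝕜) * ⟪x, y⟫_𝕜 := by
  have hQP : ∀ x y, ⟪Q x, P y⟫_𝕜 = 0 := fun x y => inner_eq_zero_symm.1 (hPQ y x)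
  simp only [inner_add_left, inner_add_right, inner_smul_left, inner_smul_right, hPQ, hQP,
    LinearIsometry.inner_map_map, RCLike.conj_ofReal, Real.cos_sub]
  push_cast
  ring

/-- The isometry `cos θ • P + sin θ • Q` obtained by rotating the range of `P` through the angle
`θ` towards the range of `Q`, for isometries `P` and `Q` with orthogonal ranges. -/
noncomputable def rotationIsometry (hPQ : ∀ x y, ⟪P x, Q y⟫_𝕜 = 0) (θ : ℝ) : E →ₗᵢ[𝕜] H :=
  ((Real.cos θ : 𝕜) • P.toLinearMap + (Real.sin θ : 𝕜) • Q.toLinearMap).isometryOfInner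
    fun x y => (inner_cos_smul_add_sin_smul hPQ θ θ x y).trans (by simp)

variable (hPQ : ∀ x y, ⟪P x, Q y⟫_𝕜 = 0)

theorem rotationIsometry_apply (θ : ℝ) (x : E) :
    rotationIsometry hPQ θ x = (Real.cos θ : 𝕜) • P x + (Real.sin θ : 𝕜) • Q x := rfl

@[simp]
theorem rotationIsometry_zero : rotationIsometry hPQ 0 = P := by
  ext x
  simp [rotationIsometry_apply]

theorem inner_rotationIsometry (α β : ℝ) (x y : E) :
    ⟪rotationIsometry hPQ α x, rotationIsometry hPQ β y⟫_𝕜 =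
      (Real.cos (α - β) : 𝕜) * ⟪x, y⟫_𝕜 :=
  inner_cos_smul_add_sin_smul hPQ α β x y

theorem rotationIsometry_add_pi_div_two (θ : ℝ) (x : E) :
    rotationIsometry hPQ (θ + Real.pi / 2) x =
      (Real.cos θ : 𝕜) • Q x - (Real.sin θ : 𝕜) • P x := by
  rw [rotationIsometry_apply, Real.cos_add_pi_div_two, Real.sin_add_pi_div_two, RCLike.ofReal_neg]
  module

theorem cos_sq_add_sin_sq_ofReal (θ : ℝ) :
    (Real.cos θ : 𝕜) ^ 2 + (Real.sin θ : 𝕜) ^ 2 = 1 := by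
  exact_mod_cast Real.cos_sq_add_sin_sq θ

theorem fst_eq_sub_rotationIsometry (θ : ℝ) (x : E) :
    P x = (Real.cos θ : 𝕜) • rotationIsometry hPQ θ x -
      (Real.sin θ : 𝕜) • rotationIsometry hPQ (θ + Real.pi / 2) x := by
  rw [rotationIsometry_add_pi_div_two, rotationIsometry_apply]
  nth_rewrite 1 [← one_smul 𝕜 (P x), ← cos_sq_add_sin_sq_ofReal θ]
  module

theorem snd_eq_add_rotationIsometry (θ : ℝ) (x : E) :
    Q x = (Real.sin θ : 𝕜) • rotationIsometry hPQ θ x +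
      (Real.cos θ : 𝕜) • rotationIsometry hPQ (θ + Real.pi / 2) x := by
  rw [rotationIsometry_add_pi_div_two, rotationIsometry_apply]
  nth_rewrite 1 [← one_smul 𝕜 (Q x), ← cos_sq_add_sin_sq_ofReal θ]
  module

theorem range_rotationIsometry_subset (θ : ℝ) :
    Set.range (rotationIsometry hPQ θ) ⊆
      (LinearMap.range P.toLinearMap ⊔ LinearMap.range Q.toLinearMap : Submodule 𝕜 H) := by
  rintro _ ⟨x, rfl⟩
  exact Submodule.add_mem_sup (Submodule.smul_mem _ _ ⟨x, rfl⟩) (Submodule.smul_mem _ _ ⟨x, rfl⟩)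

variable [CompleteSpace H] [TopologicalSpace.SeparableSpace H]

theorem exists_unitary_rotationIsometry [FiniteDimensional 𝕜 E] (hinf : ¬ FiniteDimensional 𝕜 H)
    (r : ℝ) : ∃ t : H ≃ₗᵢ[𝕜] H, ∀ θ x,
      t (rotationIsometry hPQ θ x) = rotationIsometry hPQ (r + θ) x := by
  have hcodim : ∀ r : ℝ, HasInfiniteCodim 𝕜
      (Set.range fun i : ℝ × E => rotationIsometry hPQ (r + i.1) i.2) := fun r => by
    refine hasInfiniteCodim_of_subset_finiteDimensional hinf
      (F := LinearMap.range P.toLinearMap ⊔ LinearMap.range Q.toLinearMap) ?_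
    rintro _ ⟨i, rfl⟩
    exact range_rotationIsometry_subset hPQ _ ⟨i.2, rfl⟩
  obtain ⟨t, ht⟩ := exists_unitary_map_eq_of_hasInfiniteCodim (𝕜 := 𝕜)
    (by simp [inner_rotationIsometry]) (hcodim 0) (hcodim r)
  exact ⟨t, fun θ x => by simpa using ht (θ, x)⟩

theorem IsCountablySyndetic.exists_rotation_mem_sq [FiniteDimensional 𝕜 E]
    {W : Set (H ≃ₗᵢ[𝕜] H)} (hW : IsCountablySyndetic W) (hsym : W⁻¹ = W)
    (hinf : ¬ FiniteDimensional 𝕜 H) :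
    ∃ t ∈ W ^ 2, ∃ θ, Real.sin θ ≠ 0 ∧ ∀ x, t (P x) = rotationIsometry hPQ θ x := by
  choose t ht using exists_unitary_rotationIsometry hPQ hinf
  have : Uncountable (Set.Ioo (0 : ℝ) 1) := by
    rw [← Cardinal.aleph0_lt_mk_iff, Cardinal.mk_Ioo_real zero_lt_one]
    exact Cardinal.aleph0_lt_continuum
  obtain ⟨⟨r, hr⟩, ⟨r', hr'⟩, hne, hmem⟩ :=
    hW.exists_ne_inv_mul_mem_sq hsym fun r : Set.Ioo (0 : ℝ) 1 => t r
  have hsub : r' - r ≠ 0 := fun h => hne (Subtype.ext (sub_eq_zero.1 h).symm)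
  refine ⟨_, hmem, r' - r, ?_, fun x => ?_⟩
  · rwa [Ne, Real.sin_eq_zero_iff_of_lt_of_lt (by linarith [hr.2, hr'.1, Real.pi_gt_three])
      (by linarith [hr.1, hr'.2, Real.pi_gt_three])]
  · refine ((t r).symm_apply_eq (x := t r' (P x))).2 ?_
    have h := ht r' 0 x
    rwa [rotationIsometry_zero, add_zero, ← add_sub_cancel r r', ← ht, add_sub_cancel] at h

end Rotation

section Compression

variable {𝕜 H : Type*} [RCLike 𝕜] [NormedAddCommGroup H] [InnerProductSpace 𝕜 H]

theorem exists_compression (F : Submodule 𝕜 H) [F.HasOrthogonalProjection] (u : H ≃ₗᵢ[𝕜] H) :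
    ∃ c : F →L[𝕜] F, ‖c‖ ≤ 1 ∧ ‖c - 1‖ ≤ ‖u.toLinearIsometry.toContinuousLinearMap - 1‖ ∧
      ∀ x y : F, ⟪x, c y⟫_𝕜 = ⟪(x : H), u y⟫_𝕜 := by
  have hnorm : ∀ T : H →L[𝕜] H, ‖F.orthogonalProjectionOnto ∘L T ∘L F.subtypeL‖ ≤ ‖T‖ :=
    fun T => ContinuousLinearMap.opNorm_le_bound _ (norm_nonneg _) fun x =>
      (F.norm_orthogonalProjectionOnto_apply_le _).trans (T.le_opNorm x)
  refine ⟨F.orthogonalProjectionOnto ∘L u.toLinearIsometry.toContinuousLinearMap ∘L F.subtypeL,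
    (hnorm _).trans u.toLinearIsometry.norm_toContinuousLinearMap_le, ?_, fun x y =>
      F.inner_orthogonalProjectionOnto_eq_of_mem_left x (u y)⟩
  convert hnorm (u.toLinearIsometry.toContinuousLinearMap - 1)
  ext x
  simp

variable [CompleteSpace H] [TopologicalSpace.SeparableSpace H]

theorem HasInfiniteCodim.exists_isometry_inner_eq_zero {X : Set H} (hX : HasInfiniteCodim 𝕜 X) :
    ∃ j : H →ₗᵢ[𝕜] H, ∀ x ∈ X, ∀ y, ⟪x, j y⟫_𝕜 = 0 := by
  obtain ⟨p⟩ := nonempty_hilbertBasis (𝕜 := 𝕜) (H := H)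
    (fun _ => hX (Submodule.finiteDimensional_of_le le_top)) ℕ
  obtain ⟨q⟩ := nonempty_hilbertBasis hX ℕ
  exact ⟨(Submodule.subtypeₗᵢ _).comp (p.repr.trans q.repr.symm).toLinearIsometry, fun x hx y =>
    mem_orthogonal_span_iff.1 (q.repr.symm (p.repr y)).2 x hx⟩

theorem exists_eq_mul_mul_of_inner_eq {X : Set H} {b u : H ≃ₗᵢ[𝕜] H}
    (hb : HasInfiniteCodim 𝕜 (b '' X ∪ X)) (hu : HasInfiniteCodim 𝕜 (u '' X ∪ X))
    (hbu : ∀ x ∈ X, ∀ y ∈ X, ⟪x, b y⟫_𝕜 = ⟪x, u y⟫_𝕜) :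
    ∃ a ∈ unitaryFixing 𝕜 X, ∃ c ∈ unitaryFixing 𝕜 X, u = a * b * c := by
  rw [Set.image_eq_range] at hb hu
  obtain ⟨a, ha, hab⟩ := exists_mem_unitaryFixing_map_eq (𝕜 := 𝕜) (X := X)
    (a := fun x : X => b x) (b := fun x : X => u x) (by simp)
    (fun x hx y => hbu x hx y y.2) hb hu
  refine ⟨a, ha, (a * b)⁻¹ * u, fun x hx => ?_, by group⟩
  exact ((a * b).symm_apply_eq).2 (hab ⟨x, hx⟩).symm

end Compression

section BlockRotation

theorem inner_map_map_add_inner_map_map_eq {𝕜 E : Type*} [RCLike 𝕜] [NormedAddCommGroup E]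
    [InnerProductSpace 𝕜 E] [CompleteSpace E] {d e : E →L[𝕜] E}
    (hde : star d * d + star e * e = 1) (x y : E) :
    ⟪d x, d y⟫_𝕜 + ⟪e x, e y⟫_𝕜 = ⟪x, y⟫_𝕜 := by
  rw [← ContinuousLinearMap.adjoint_inner_right d, ← ContinuousLinearMap.adjoint_inner_right e,
    ← inner_add_right]
  exact congrArg (fun z => ⟪x, z⟫_𝕜) (DFunLike.congr_fun hde y)

variable {𝕜 E H : Type*} [RCLike 𝕜] [NormedAddCommGroup E] [InnerProductSpace 𝕜 E]
  [FiniteDimensional 𝕜 E] [NormedAddCommGroup H] [InnerProductSpace 𝕜 H]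
  [CompleteSpace H] [TopologicalSpace.SeparableSpace H] {P Q R : E →ₗᵢ[𝕜] H} {θ : ℝ}

theorem exists_isometry_orthogonal (hinf : ¬ FiniteDimensional 𝕜 H) :
    ∃ R : E →ₗᵢ[𝕜] H, (∀ x y, ⟪P x, R y⟫_𝕜 = 0) ∧ ∀ x y, ⟪Q x, R y⟫_𝕜 = 0 := by
  obtain ⟨j, hj⟩ := (hasInfiniteCodim_of_subset_finiteDimensional hinf
    (F := LinearMap.range P.toLinearMap ⊔ LinearMap.range Q.toLinearMap)
      subset_rfl).exists_isometry_inner_eq_zero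
  exact ⟨j.comp P, fun x y => hj _ (Submodule.mem_sup_left ⟨x, rfl⟩) _,
    fun x y => hj _ (Submodule.mem_sup_right ⟨x, rfl⟩) _⟩

variable [CompleteSpace E]

theorem exists_mem_unitaryFixing_range_apply_eq (hinf : ¬ FiniteDimensional 𝕜 H)
    (hPQ : ∀ x y, ⟪P x, Q y⟫_𝕜 = 0) (hPR : ∀ x y, ⟪P x, R y⟫_𝕜 = 0)
    (hQR : ∀ x y, ⟪Q x, R y⟫_𝕜 = 0) {d e : E →L[𝕜] E} (hde : star d * d + star e * e = 1) :
    ∃ h ∈ unitaryFixing 𝕜 (Set.range P), ∀ x, h (Q x) = Q (d x) + R (e x) := by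
  have hRQ : ∀ x y, ⟪R x, Q y⟫_𝕜 = 0 := fun x y => inner_eq_zero_symm.1 (hQR y x)
  let G := LinearMap.range P.toLinearMap ⊔ LinearMap.range Q.toLinearMap ⊔
    LinearMap.range R.toLinearMap
  have hP : Set.range P ⊆ G := by
    rintro _ ⟨x, rfl⟩
    exact Submodule.mem_sup_left (Submodule.mem_sup_left ⟨x, rfl⟩)
  have hQ : ∀ x, Q x ∈ G := fun x => Submodule.mem_sup_left (Submodule.mem_sup_right ⟨x, rfl⟩)
  have hR : ∀ x, R x ∈ G := fun x => Submodule.mem_sup_right ⟨x, rfl⟩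
  refine exists_mem_unitaryFixing_map_eq (fun x y => ?_) ?_
    (hasInfiniteCodim_of_subset_finiteDimensional hinf (F := G) (Set.union_subset ?_ hP))
    (hasInfiniteCodim_of_subset_finiteDimensional hinf (F := G) (Set.union_subset ?_ hP))
  · simp [inner_add_left, inner_add_right, hQR, hRQ, inner_map_map_add_inner_map_map_eq hde]
  · rintro _ ⟨y, rfl⟩ x
    simp [inner_add_right, hPQ, hPR]
  · rintro _ ⟨x, rfl⟩
    exact hQ x
  · rintro _ ⟨x, rfl⟩
    exact G.add_mem (hQ _) (hR _)

variable (hPQ : ∀ x y, ⟪P x, Q y⟫_𝕜 = 0)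

/- In the frame `rotationIsometry θ`, `rotationIsometry (θ + π / 2)`, `R` the operator `h` has
second column `(0, d, e)`; this is its matrix in the frame `P`, `Q`, `R`. -/
theorem exists_mem_unitaryFixing_rotationIsometry (hinf : ¬ FiniteDimensional 𝕜 H)
    (hPR : ∀ x y, ⟪P x, R y⟫_𝕜 = 0) (hQR : ∀ x y, ⟪Q x, R y⟫_𝕜 = 0) (θ : ℝ) {d e : E →L[𝕜] E}
    (hde : star d * d + star e * e = 1) :
    ∃ h ∈ unitaryFixing 𝕜 (Set.range (rotationIsometry hPQ θ)),
      (∀ x, h (P x) = P ((Real.cos θ : 𝕜) ^ 2 • x + (Real.sin θ : 𝕜) ^ 2 • d x) +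
        ((Real.sin θ : 𝕜) * Real.cos θ) • Q (x - d x) - (Real.sin θ : 𝕜) • R (e x)) ∧
      ∀ x, h (Q x) = ((Real.sin θ : 𝕜) * Real.cos θ) • P (x - d x) +
        Q ((Real.sin θ : 𝕜) ^ 2 • x + (Real.cos θ : 𝕜) ^ 2 • d x) +
          (Real.cos θ : 𝕜) • R (e x) := by
  have hrot : ∀ α x y, ⟪rotationIsometry hPQ α x, R y⟫_𝕜 = 0 := fun α x y => by
    simp [rotationIsometry_apply, inner_add_left, inner_smul_left, hPR, hQR]
  obtain ⟨h, hfix, hh⟩ := exists_mem_unitaryFixing_range_apply_eq hinf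
    (P := rotationIsometry hPQ θ) (Q := rotationIsometry hPQ (θ + Real.pi / 2))
    (fun x y => by simp [inner_rotationIsometry]) (hrot _) (hrot _) hde
  have hfix' : ∀ x, h (rotationIsometry hPQ θ x) = rotationIsometry hPQ θ x :=
    fun x => hfix _ ⟨x, rfl⟩
  refine ⟨h, hfix, fun x => ?_, fun x => ?_⟩
  · rw [fst_eq_sub_rotationIsometry hPQ θ x, map_sub, map_smul, map_smul, hfix', hh,
      rotationIsometry_add_pi_div_two, rotationIsometry_apply]
    simp only [map_sub, map_add, map_smul]
    module
  · rw [snd_eq_add_rotationIsometry hPQ θ x, map_add, map_smul, map_smul, hfix', hh,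
      rotationIsometry_add_pi_div_two, rotationIsometry_apply]
    simp only [map_sub, map_add, map_smul]
    module

theorem exists_mul_mul_apply_eq (hinf : ¬ FiniteDimensional 𝕜 H) {v z w : E →L[𝕜] E}
    (hz : star z * z = 1) (hw : star w * w = 1)
    (hvzw : IsRotationPair (Real.cos θ : 𝕜) (Real.sin θ : 𝕜) v z w) :
    ∃ h ∈ unitaryFixing 𝕜 (Set.range (rotationIsometry hPQ θ)),
      ∃ k ∈ unitaryFixing 𝕜 (Set.range P), ∀ x, (h * k * h) (P x) = P (v x) := by
  obtain ⟨R, hPR, hQR⟩ := exists_isometry_orthogonal (P := P) (Q := Q) hinf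
  obtain ⟨h, hfix, hP, hQ⟩ := exists_mem_unitaryFixing_rotationIsometry hPQ hinf hPR hQR θ
    (d := z) (e := 0) (by simpa using hz)
  obtain ⟨k, hk, hkQ⟩ := exists_mem_unitaryFixing_range_apply_eq hinf hPQ hPR hQR
    (d := w) (e := 0) (by simpa using hw)
  refine ⟨h, hfix, k, hk, fun x => ?_⟩
  have hkP : ∀ x, k (P x) = P x := fun x => hk _ ⟨x, rfl⟩
  have hsnd := congrArg (((Real.sin θ : 𝕜) * Real.cos θ) • Q ·)
    (DFunLike.congr_fun hvzw.snd_eq x)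
  have hfst := congrArg P (DFunLike.congr_fun hvzw.fst_eq x)
  simp only [map_add, map_smul, map_sub, zero_apply, map_zero, smul_zero, sub_zero, add_zero,
    add_apply, mul_apply_eq_comp, smul_apply, one_apply_eq_self, sub_apply, smul_add]
    at hP hQ hkQ hsnd hfst
  change h (k (h (P x))) = P (v x)
  rw [← add_zero (P (v x)), ← hsnd, ← hfst]
  simp only [hP, hQ, hkQ, hkP, map_sub, map_add, map_smul]
  module

end BlockRotation

theorem IsCountablySyndetic.pow_two_mul_subset {G : Type*} [Group G] {W : Set G}
    (hW : IsCountablySyndetic W) (hsym : W⁻¹ = W) {m n : ℕ} (hmn : m ≤ n) :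
    W ^ (2 * m) ⊆ W ^ (2 * n) := by
  rw [pow_mul, pow_mul]
  exact Set.pow_subset_pow_right (hW.one_mem_sq hsym) hmn

section NormBall

variable {E H : Type*} [NormedAddCommGroup E] [InnerProductSpace ℂ E] [FiniteDimensional ℂ E]
  [CompleteSpace E] [NormedAddCommGroup H] [InnerProductSpace ℂ H] [CompleteSpace H]
  [TopologicalSpace.SeparableSpace H] {P Q : E →ₗᵢ[ℂ] H}

theorem exists_mul_inner_map_eq (hinf : ¬ FiniteDimensional ℂ H) (hPQ : ∀ x y, ⟪P x, Q y⟫_ℂ = 0)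
    {θ : ℝ} (hθ : Real.sin θ ≠ 0) {c : E →L[ℂ] E} (hc : ‖c‖ ≤ 1)
    (hc1 : ‖c - 1‖ < Real.sin θ ^ 2 / 3) :
    ∃ b ∈ (unitaryFixing ℂ (Set.range (rotationIsometry hPQ θ)) : Set (H ≃ₗᵢ[ℂ] H)) *
        unitaryFixing ℂ (Set.range P) * unitaryFixing ℂ (Set.range (rotationIsometry hPQ θ)),
      ∀ x y, ⟪P x, b (P y)⟫_ℂ = ⟪x, c y⟫_ℂ := by
  obtain ⟨v, hv, hv1, d, e, hde, rfl⟩ := exists_mem_unitary_mul_one_sub_smul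
    (sq_pos_of_ne_zero hθ) (Real.sin_sq_le_one θ) hc hc1
  obtain ⟨z, hz, w, hw, hvzw⟩ := exists_isRotationPair hθ (Real.cos_sq_add_sin_sq θ) hv hv1
  obtain ⟨h, hh, k, hk, hv'⟩ := exists_mul_mul_apply_eq hPQ hinf hz.1 hw.1 hvzw
  obtain ⟨R, hPR, hQR⟩ := exists_isometry_orthogonal (P := P) (Q := Q) hinf
  obtain ⟨p, hp, hpP, -⟩ := exists_mem_unitaryFixing_rotationIsometry hPQ hinf hPR hQR θ hde
  refine ⟨h * k * (h * p), Set.mul_mem_mul (Set.mul_mem_mul hh hk) (mul_mem hh hp), fun x y => ?_⟩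
  obtain ⟨x, rfl⟩ : ∃ x', v x' = x := ⟨star v x, DFunLike.congr_fun hv.2 x⟩
  calc ⟪P (v x), (h * k * (h * p)) (P y)⟫_ℂ
      = ⟪(h * k * h) (P x), (h * k * h) (p (P y))⟫_ℂ := by rw [hv']; rfl
    _ = ⟪P x, p (P y)⟫_ℂ := LinearIsometryEquiv.inner_map_map _ _ _
    _ = ⟪x, (1 - ((Real.sin θ ^ 2 : ℝ) : ℂ) • (1 - d)) y⟫_ℂ := by
      have hy : (Real.cos θ : ℂ) ^ 2 • y + (Real.sin θ : ℂ) ^ 2 • d y =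
          (1 - ((Real.sin θ ^ 2 : ℝ) : ℂ) • (1 - d)) y := by
        have hcos : (Real.cos θ : ℂ) ^ 2 = 1 - (Real.sin θ : ℂ) ^ 2 :=
          eq_sub_of_add_eq (cos_sq_add_sin_sq_ofReal θ)
        change _ = y - ((Real.sin θ ^ 2 : ℝ) : ℂ) • (y - d y)
        rw [hcos, Complex.ofReal_pow]
        module
      rw [← hy, hpP, inner_sub_right, inner_add_right, inner_smul_right, inner_smul_right, hPQ,
        hPR, LinearIsometry.inner_map_map, mul_zero, mul_zero, add_zero, sub_zero]
      rfl
    _ = ⟪v x, (v * (1 - ((Real.sin θ ^ 2 : ℝ) : ℂ) • (1 - d))) y⟫_ℂ :=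
      (ContinuousLinearMap.inner_map_map_of_mem_unitary hv _ _).symm

theorem mem_mul_of_norm_sub_one_lt (hinf : ¬ FiniteDimensional ℂ H) {F : Submodule ℂ H}
    [FiniteDimensional ℂ F] {Q : F →ₗᵢ[ℂ] H} (hQ : ∀ x y, ⟪F.subtypeₗᵢ x, Q y⟫_ℂ = 0) {θ : ℝ}
    (hθ : Real.sin θ ≠ 0) {u : H ≃ₗᵢ[ℂ] H}
    (hu : ‖u.toLinearIsometry.toContinuousLinearMap - 1‖ < Real.sin θ ^ 2 / 3) :
    u ∈ (unitaryFixing ℂ (F : Set H) : Set (H ≃ₗᵢ[ℂ] H)) *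
      (unitaryFixing ℂ (Set.range (rotationIsometry hQ θ)) * unitaryFixing ℂ (F : Set H) *
        unitaryFixing ℂ (Set.range (rotationIsometry hQ θ))) * unitaryFixing ℂ (F : Set H) := by
  obtain ⟨c, hc, hc1, hcu⟩ := exists_compression F u
  obtain ⟨b, hb, hbc⟩ := exists_mul_inner_map_eq hinf hQ hθ hc (hc1.trans_lt hu)
  have hcodim : ∀ g : H ≃ₗᵢ[ℂ] H, HasInfiniteCodim ℂ (g '' F ∪ F) := fun g => by
    refine hasInfiniteCodim_of_subset_finiteDimensional hinf
      (F := F.map g.toLinearEquiv.toLinearMap ⊔ F) (Set.union_subset ?_ ?_)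
    · exact (le_sup_left : F.map g.toLinearEquiv.toLinearMap ≤ _)
    · exact (le_sup_right : F ≤ _)
  obtain ⟨a, ha, c', hc', rfl⟩ := exists_eq_mul_mul_of_inner_eq (hcodim b) (hcodim u)
    fun x hx y hy => (hbc ⟨x, hx⟩ ⟨y, hy⟩).trans (hcu _ _)
  have hrange : Set.range F.subtypeₗᵢ = F := Subtype.range_coe
  rw [hrange] at hb
  exact Set.mul_mem_mul (Set.mul_mem_mul ha hb) hc'

end NormBall

theorem norm_ball_subset_pow_general
    {H : Type*} [NormedAddCommGroup H] [InnerProductSpace ℂ H] [CompleteSpace H]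
    [TopologicalSpace.SeparableSpace H] (hinf : ¬ FiniteDimensional ℂ H)
    {W : Set (H ≃ₗᵢ[ℂ] H)} (hsym : W⁻¹ = W) (hW : IsCountablySyndetic W) :
    ∃ ε : ℝ, 0 < ε ∧
      ∀ u : H ≃ₗᵢ[ℂ] H, ‖u.toLinearIsometry.toContinuousLinearMap - 1‖ < ε →
        u ∈ W ^ 208 := by
  obtain ⟨F, _, hF⟩ := hW.exists_finiteDimensional_unitaryFixing_subset hsym hinf
  obtain ⟨Q, hQ, -⟩ := exists_isometry_orthogonal (P := F.subtypeₗᵢ) (Q := F.subtypeₗᵢ) hinf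
  obtain ⟨t, ht, θ, hθ, htF⟩ := hW.exists_rotation_mem_sq hQ hsym hinf
  have htF' : Set.range (rotationIsometry hQ θ) = t '' F := by
    rw [Set.image_eq_range]
    exact congrArg Set.range (funext fun x => (htF x).symm)
  have hF' : (unitaryFixing ℂ (Set.range (rotationIsometry hQ θ)) : Set (H ≃ₗᵢ[ℂ] H)) ⊆ W ^ 44 :=
    htF' ▸ unitaryFixing_image_subset_pow hsym hF ht
  refine ⟨Real.sin θ ^ 2 / 3, by positivity, fun u hu => ?_⟩
  rw [show 208 = 40 + (44 + 40 + 44) + 40 from rfl, pow_add, pow_add _ 40, pow_add _ (44 + 40),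
    pow_add _ 44]
  exact Set.mul_subset_mul (Set.mul_subset_mul hF (Set.mul_subset_mul (Set.mul_subset_mul hF' hF)
    hF')) hF (mem_mul_of_norm_sub_one_lt hinf hQ hθ hu)

/-- Let `H` be an infinite-dimensional separable complex Hilbert space and `W` a symmetric
countably syndetic subset of `U(H)`. Then there exists `ε > 0` such that the open ball of
radius `ε` around the identity in the operator norm is contained in `W ^ 496`. -/
theorem norm_ball_subset_pow
    {H : Type*} [NormedAddCommGroup H] [InnerProductSpace ℂ H] [CompleteSpace H]
    [TopologicalSpace.SeparableSpace H] (hinf : ¬ FiniteDimensional ℂ H)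
    (W : Set (H ≃ₗᵢ[ℂ] H)) (hsym : W⁻¹ = W)
    (hsynd : ∃ s : ℕ → (H ≃ₗᵢ[ℂ] H), ∀ g : (H ≃ₗᵢ[ℂ] H), ∃ n : ℕ, g ∈ s n • W) :
    ∃ ε : ℝ, 0 < ε ∧
      ∀ u : H ≃ₗᵢ[ℂ] H, ‖u.toLinearIsometry.toContinuousLinearMap - 1‖ < ε →
        u ∈ W ^ 496 :=
  let ⟨ε, hε, h⟩ := norm_ball_subset_pow_general hinf hsym hsynd
  ⟨ε, hε, fun u hu =>
    IsCountablySyndetic.pow_two_mul_subset hsynd hsym (by norm_num : 104 ≤ 248) (h u hu)⟩
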